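/- arXiv:1112.5709 — 2 statements merged into one kernel-verified Lean document; each statement's English description precedes it below -/
import Mathlib

section
/- Let G₁ and G₂ be groups that have Stallings sections, let H be a finite group, and let φ₁ : H → G₁ and φ₂ : H → G₂ be injective group homomorphisms. Then the free product with amalgamation G₁ *_H G₂ (amalgamated over φ₁ and φ₂) also has a Stallings section. -/
/-!
Reduced words over Ã are the same thing as elements of the free group on `A`. Under this
dictionary a Stallings section becomes a subset `S` of a free group, closed under inverses and
mapping onto `G`, such that for all `s ∈ S` and `g ∈ G` there is `u ∈ S` with value `g` and
`u⁻¹ s ∈ S`: this is the triangle condition (`IsFreeSection`), a restatement of (S2). Regularity of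
`S` and of the `S_g` becomes rationality of subsets of the free group (`Rat`), by Benois' theorem
(`Rat.isRegular`), which leaves the freedom to build sets from products and unions without caring
about reduction.

Given free sections `S i` of the factors `G i` of an amalgam over the finite group `H`, take as
alphabet the disjoint union of their alphabets and of `H`. Let `K` be the free group on the letters
of `H`, and `D i` the set of elements of `S i` whose value lies outside `H`. The section of the
amalgam consists of all alternating products `k₀ d₁ k₁ ⋯ dₙ kₙ`, where `kₗ ∈ K`, `dₗ ∈ D jₗ` and
`jₗ ≠ jₗ₊₁` (`Alt`).

* Triangle condition (`Alt.triangle`): given `z` and `w` in the section, a `u` with the value of `z`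
  and with `u⁻¹ w` in the section is found by induction on `z`. As long as the values of `z` and
  `w` agree modulo `H`, `u` copies the syllables of `w`, corrected by elements of `K`. At the first
  syllable where they differ either the two indices are different, and `u` continues as `z`, or the
  indices agree, and the triangle condition in that factor supplies the next syllable of `u`, after
  which `u` continues as `z`.
* Rationality of the whole section (`Alt.rat`): alternating products are read along a finite graph
  with rational labels.
* Rationality of the fibres (`Alt.rat_fiber`): by the normal form theorem, two alternating products
  with the same value have the same indices, and their syllable values differ only by elements of
  `H`. As `H` is finite, the fibre is a finite union of products of fibres in `K` and in the `D i`.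

The argument is carried out for Mathlib's `Monoid.PushoutI`
(`hasStallingsSection_pushoutI`), which is isomorphic to every pushout of the two embeddings.
-/

/-!  Common framework: words over an involutive alphabet Ã = A ∪ A⁻¹ (modelled as
`α × Bool`), free reduction, matched epimorphisms, Stallings sections and
Ã-automata, following Silva–Soler-Escrivà–Ventura. -/

/-- A word over the involutive alphabet Ã = A ∪ A⁻¹: the letter `(a, tt)` denotes
`a` and `(a, ff)` denotes `a⁻¹` (the `FreeGroup` convention). -/
abbrev Word (α : Type) : Type := List (α × Bool)

namespace Stallings

instance {β : Type} : HasSubset (Language β) := ⟨fun L M => ∀ w ∈ L, w ∈ M⟩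
instance {β : Type} : Union (Language β) := ⟨fun L M => {w | w ∈ L ∨ w ∈ M}⟩
instance {β : Type} : Inter (Language β) := ⟨fun L M => {w | w ∈ L ∧ w ∈ M}⟩
instance {β : Type} : EmptyCollection (Language β) := ⟨(∅ : Set (List β))⟩

variable {α : Type} {G : Type} [Group G]

/-- The formal inverse of a letter of Ã. -/
def letterInv (x : α × Bool) : α × Bool := (x.1, !x.2)

/-- The formal inverse `w⁻¹` of a word over Ã. -/
def wordInv (w : Word α) : Word α := (w.map letterInv).reverse

/-- The free reduction `w̄` of a word over Ã (iterated deletion of factors `a a⁻¹`). -/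
noncomputable def redW (w : Word α) : Word α :=
  letI := Classical.decEq α
  FreeGroup.reduce w

/-- The reduction `L̄` of a language over Ã. -/
noncomputable def red (L : Language (α × Bool)) : Language (α × Bool) :=
  redW '' L

/-- The set `R_A` of reduced words over Ã. -/
noncomputable def Reduced : Language (α × Bool) := {w | redW w = w}

/-- Evaluation of a monoid homomorphism `π : Ã* → G` at a word. -/
def ev (π : FreeMonoid (α × Bool) →* G) (w : Word α) : G :=
  π (FreeMonoid.ofList w)

/-- The image of a language under (evaluation of) `π`. -/
def evImg (π : FreeMonoid (α × Bool) →* G) (L : Language (α × Bool)) : Set G :=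
  {g | ∃ w ∈ L, ev π w = g}

/-- A matched epimorphism (m-epi) `π : Ã* → G`: a surjective monoid homomorphism
sending formal inverses to inverses. -/
structure IsMEpi (π : FreeMonoid (α × Bool) →* G) : Prop where
  surjective : Function.Surjective π
  matched : ∀ (a : α) (b : Bool),
    π (FreeMonoid.of (a, !b)) = (π (FreeMonoid.of (a, b)))⁻¹

/-- `S_X = Xπ⁻¹ ∩ S`, for `X ⊆ G`. -/
def sub (S : Language (α × Bool)) (π : FreeMonoid (α × Bool) →* G) (X : Set G) :
    Language (α × Bool) :=
  {w ∈ S | ev π w ∈ X}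

/-- A Stallings section for an m-epi `π : Ã* → G`: a regular section `S ⊆ R_A`
such that each `S_g` is regular (S1), and `S_{gh} ⊆ (S_g S_h)‾` (S2). -/
structure IsStallingsSection (π : FreeMonoid (α × Bool) →* G)
    (S : Language (α × Bool)) : Prop where
  regular : S.IsRegular
  reduced : S ⊆ Reduced
  inv_mem : ∀ w ∈ S, wordInv w ∈ S
  exists_rep : ∀ g : G, ∃ w ∈ S, ev π w = g
  s1 : ∀ g : G, (sub S π {g}).IsRegular
  s2 : ∀ g h : G, sub S π {g * h} ⊆ red (sub S π {g} * sub S π {h})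

/-- A group has a Stallings section if some m-epi onto it (from the free monoid on
an involutive finite alphabet) admits a Stallings section. -/
def HasStallingsSection (G : Type) [Group G] : Prop :=
  ∃ (α : Type) (π : FreeMonoid (α × Bool) →* G) (S : Language (α × Bool)),
    Finite α ∧ IsMEpi π ∧ IsStallingsSection π S

/-- `Pref L`: the set of prefixes of words of `L`. -/
def Pref (L : Language (α × Bool)) : Language (α × Bool) :=
  {u | ∃ v, u ++ v ∈ L}

/-- An extendable Stallings section: every `u ∈ S` admits a reduced word `v` with
`u vⁿ ∈ S` for all `n` and `u ∈ Pref (S_{(u vⁿ u⁻¹)π})` for almost all `n`. -/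
def Extendable (π : FreeMonoid (α × Bool) →* G) (S : Language (α × Bool)) : Prop :=
  ∀ u ∈ S, ∃ v : Word α, v ∈ Reduced ∧
    (∀ n : ℕ, u ++ (List.replicate n v).flatten ∈ S) ∧
    ∃ N : ℕ, ∀ n ≥ N, u ∈ Pref (sub S π {ev π u * (ev π v) ^ n * (ev π u)⁻¹})

/-- An Ã-automaton with state type `Q`, initial state `start`, terminal states
`accept` and edge set `edges`. -/
structure Automaton (β : Type) (Q : Type) where
  start : Q
  accept : Set Q
  edges : Set (Q × β × Q)

namespace Automaton

variable {β Q : Type}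

/-- `M.Path p w q`: there is a path from `p` to `q` labelled `w`. -/
inductive Path (M : Automaton β Q) : Q → List β → Q → Prop
  | nil (q : Q) : Path M q [] q
  | cons {p q r : Q} {a : β} {w : List β} :
      (p, a, q) ∈ M.edges → Path M q w r → Path M p (a :: w) r

/-- The language recognized by an automaton. -/
def lang (M : Automaton β Q) : Language β :=
  {w | ∃ t ∈ M.accept, M.Path M.start w t}

/-- A trim automaton: every state lies on some successful path. -/
def Trim (M : Automaton β Q) : Prop :=
  ∀ q : Q, ∃ (u v : List β) (t : Q), t ∈ M.accept ∧ M.Path M.start u q ∧ M.Path q v t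

/-- An involutive Ã-automaton. -/
def Involutive {α : Type} (M : Automaton (α × Bool) Q) : Prop :=
  ∀ p a q, (p, a, q) ∈ M.edges → (q, letterInv a, p) ∈ M.edges

/-- A deterministic automaton. -/
def Deterministic (M : Automaton β Q) : Prop :=
  ∀ p a q q', (p, a, q) ∈ M.edges → (p, a, q') ∈ M.edges → q = q'

/-- An inverse automaton: involutive, deterministic, trim, with a single
terminal state. -/
def IsInverse {α : Type} (M : Automaton (α × Bool) Q) : Prop :=
  M.Involutive ∧ M.Deterministic ∧ M.Trim ∧ ∃ t : Q, M.accept = {t}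

/-- The automaton obtained by identifying the states `p` and `q` (the quotient is
realized on the same state type, redirecting `q` to `p`). -/
def merge [DecidableEq Q] (M : Automaton β Q) (p q : Q) : Automaton β Q :=
  let f : Q → Q := fun x => if x = q then p else x
  { start := f M.start
    accept := f '' M.accept
    edges := {e | ∃ e' ∈ M.edges, e = (f e'.1, e'.2.1, f e'.2.2)} }

end Automaton

end Stallings

namespace Stallings

open FreeGroup (mk)

/-! ### Rational subsets of free groups -/

/-- `GPath E p m q`: the labelled graph with edge relation `E` has a path from `p` to `q` whose
labels multiply to `m`. -/
inductive GPath {M Q : Type} [Monoid M] (E : Q → M → Q → Prop) : Q → M → Q → Prop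
  | nil (p : Q) : GPath E p 1 p
  | cons {p q r : Q} {x m : M} : E p x q → GPath E q m r → GPath E p (x * m) r

theorem GPath.trans {M Q : Type} [Monoid M] {E : Q → M → Q → Prop} {p q r : Q} {x y : M}
    (h : GPath E p x q) (h' : GPath E q y r) : GPath E p (x * y) r := by
  induction h with
  | nil p => simpa using h'
  | cons e _ ih => rw [mul_assoc]; exact .cons e (ih h')

theorem GPath.single {M Q : Type} [Monoid M] {E : Q → M → Q → Prop} {p q : Q} {x : M}
    (h : E p x q) : GPath E p x q := by
  simpa using GPath.cons h (.nil q)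

/-- The labels allowed on edges: the identity, and the letters of the free group. -/
def Lbl {B : Type} (x : FreeGroup B) : Prop := x = 1 ∨ ∃ a : B × Bool, x = mk [a]

/-- A rational subset of a free group: the set of labels of the paths between two given sets of
vertices in a finite graph whose edges are labelled by letters or by the identity. -/
def Rat {B : Type} (X : Set (FreeGroup B)) : Prop :=
  ∃ (Q : Type) (_ : Finite Q) (E : Q → FreeGroup B → Q → Prop) (I J : Set Q),
    (∀ p x q, E p x q → Lbl x) ∧ ∀ m, m ∈ X ↔ ∃ p ∈ I, ∃ q ∈ J, GPath E p m q

/-- The edges of the graph obtained from a graph with vertex set `Q` by replacing each edge `e`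
by the whole graph `E e`, entered and left through edges labelled by the identity. -/
inductive SubstEdge {M Q ι : Type} [Monoid M] (src tgt : ι → Q) {V : ι → Type}
    (E : ∀ e, V e → M → V e → Prop) (I J : ∀ e, Set (V e)) :
    (Q ⊕ (Σ e, V e)) → M → (Q ⊕ (Σ e, V e)) → Prop
  | enter (e : ι) (a : V e) : a ∈ I e → SubstEdge src tgt E I J (.inl (src e)) 1 (.inr ⟨e, a⟩)
  | step (e : ι) (a b : V e) (x : M) : E e a x b →
      SubstEdge src tgt E I J (.inr ⟨e, a⟩) x (.inr ⟨e, b⟩)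
  | exit (e : ι) (a : V e) : a ∈ J e → SubstEdge src tgt E I J (.inr ⟨e, a⟩) 1 (.inl (tgt e))

/-- Edges of a finite graph labelled by arbitrary members of rational sets still yield a rational
set. -/
theorem Rat.graph {B Q ι : Type} [Finite Q] [Finite ι] (src tgt : ι → Q)
    {X : ι → Set (FreeGroup B)} (hX : ∀ e, Rat (X e)) (I J : Set Q) :
    Rat {m | ∃ p ∈ I, ∃ q ∈ J,
      GPath (fun p m q => ∃ e, src e = p ∧ tgt e = q ∧ m ∈ X e) p m q} := by
  choose V hV E I' J' hE hXE using hX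
  refine ⟨Q ⊕ (Σ e, V e), inferInstance, SubstEdge src tgt E I' J', Sum.inl '' I, Sum.inl '' J,
    ?_, ?_⟩
  · rintro _ _ _ (_ | ⟨e, a, b, x, h⟩ | _)
    · exact .inl rfl
    · exact hE _ _ _ _ h
    · exact .inl rfl
  intro m
  have key1 : ∀ e a x b, GPath (E e) a x b →
      GPath (SubstEdge src tgt E I' J') (.inr ⟨e, a⟩) x (.inr ⟨e, b⟩) := by
    intro e a x b h
    induction h with
    | nil p => exact .nil _
    | cons h _ ih => exact .cons (.step _ _ _ _ h) ih
  have key2 : ∀ p m q, GPath (fun p m q => ∃ e, src e = p ∧ tgt e = q ∧ m ∈ X e) p m q →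
      GPath (SubstEdge src tgt E I' J') (.inl p) m (.inl q) := by
    intro p m q h
    induction h with
    | nil p => exact .nil _
    | cons h _ ih =>
      obtain ⟨e, rfl, rfl, hx⟩ := h
      obtain ⟨a, ha, b, hb, hab⟩ := (hXE _ _).1 hx
      refine GPath.trans ?_ ih
      have := (GPath.cons (.enter (src := src) (tgt := tgt) (E := E) (J := J') e a ha)
        ((key1 _ _ _ _ hab).trans (.single (.exit e b hb))))
      simpa using this
  have key3 : ∀ x m y, GPath (SubstEdge src tgt E I' J') x m y → ∀ q, y = .inl q →
      match x with
      | .inl p => GPath (fun p m q => ∃ e, src e = p ∧ tgt e = q ∧ m ∈ X e) p m q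
      | .inr ⟨e, a⟩ => ∃ m₁ m₂, m = m₁ * m₂ ∧ (∃ b ∈ J' e, GPath (E e) a m₁ b) ∧
          GPath (fun p m q => ∃ e, src e = p ∧ tgt e = q ∧ m ∈ X e) (tgt e) m₂ q := by
    intro x m y h
    induction h with
    | nil p => rintro q rfl; exact .nil _
    | cons h _ ih =>
      intro q hq
      have ih := ih q hq
      cases h with
      | enter e a ha =>
        obtain ⟨m₁, m₂, rfl, ⟨b, hb, hab⟩, h2⟩ := ih
        rw [one_mul]
        exact .cons ⟨e, rfl, rfl, (hXE _ _).2 ⟨a, ha, b, hb, hab⟩⟩ h2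
      | step e a b x h =>
        obtain ⟨m₁, m₂, rfl, ⟨b, hb, hab⟩, h2⟩ := ih
        exact ⟨_, m₂, (mul_assoc _ _ _).symm, ⟨b, hb, .cons h hab⟩, h2⟩
      | exit e a ha =>
        exact ⟨1, _, rfl, ⟨a, ha, .nil _⟩, ih⟩
  constructor
  · rintro ⟨p, hp, q, hq, h⟩
    exact ⟨_, ⟨p, hp, rfl⟩, _, ⟨q, hq, rfl⟩, key2 _ _ _ h⟩
  · rintro ⟨_, ⟨p, hp, rfl⟩, _, ⟨q, hq, rfl⟩, h⟩
    exact ⟨p, hp, q, hq, key3 _ _ _ h q rfl⟩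

theorem Rat.congr {B : Type} {X Y : Set (FreeGroup B)} (h : Rat X) (e : X = Y) : Rat Y := e ▸ h

theorem Rat.iUnion {B ι : Type} [Finite ι] {X : ι → Set (FreeGroup B)} (hX : ∀ e, Rat (X e)) :
    Rat (⋃ e, X e) := by
  refine (Rat.graph (Q := Bool) (fun _ => false) (fun _ => true) hX {false} {true}).congr ?_
  ext m
  simp only [Set.mem_ofPred_eq, Set.mem_singleton_iff, exists_eq_left, Set.mem_iUnion]
  constructor
  · intro h
    cases h with
    | cons h h' =>
      obtain ⟨e, -, rfl, hx⟩ := h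
      cases h' with
      | nil => exact ⟨e, by simpa using hx⟩
      | cons h _ => obtain ⟨_, h, -⟩ := h; cases h
  · rintro ⟨e, h⟩
    exact .single ⟨e, rfl, rfl, h⟩

theorem Rat.mul {B : Type} {X Y : Set (FreeGroup B)} (hX : Rat X) (hY : Rat Y) :
    Rat {m | ∃ x ∈ X, ∃ y ∈ Y, m = x * y} := by
  refine (Rat.graph (Q := Option Bool) (ι := Bool) (fun e => bif e then some true else none)
    (fun e => bif e then some false else some true) (X := fun e => bif e then Y else X)
    (by rintro (_ | _) <;> assumption) {none} {some false}).congr ?_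
  ext m
  simp only [Set.mem_ofPred_eq, Set.mem_singleton_iff, exists_eq_left]
  constructor
  · intro h
    cases h with
    | cons h h' =>
      obtain ⟨_ | _, h1, rfl, hx⟩ := h
      · cases h' with
        | cons h h' =>
          obtain ⟨_ | _, h1, rfl, hy⟩ := h
          · cases h1
          cases h' with
          | nil => exact ⟨_, hx, _, hy, by simp⟩
          | cons h _ => obtain ⟨_ | _, h, -⟩ := h <;> cases h
      · cases h1
  · rintro ⟨x, hx, y, hy, rfl⟩
    exact .cons (q := some true) ⟨false, rfl, rfl, hx⟩ (.single ⟨true, rfl, rfl, hy⟩)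

theorem Rat.empty {B : Type} : Rat (∅ : Set (FreeGroup B)) :=
  ⟨Unit, inferInstance, fun _ _ _ => False, ∅, ∅, by simp, by simp⟩

theorem Rat.union {B : Type} {X Y : Set (FreeGroup B)} (hX : Rat X) (hY : Rat Y) :
    Rat (X ∪ Y) := by
  refine (Rat.iUnion (ι := Bool) (X := fun e => bif e then Y else X)
    (by rintro (_ | _) <;> assumption)).congr ?_
  ext; simp

theorem Rat.map {B C : Type} (f : B → C) {X : Set (FreeGroup B)} (hX : Rat X) :
    Rat (FreeGroup.map f '' X) := by
  obtain ⟨Q, hQ, E, I, J, hE, h⟩ := hX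
  refine ⟨Q, hQ, fun p y q => ∃ x, E p x q ∧ FreeGroup.map f x = y, I, J, ?_, ?_⟩
  · rintro p _ q ⟨x, hx, rfl⟩
    obtain rfl | ⟨a, rfl⟩ := hE _ _ _ hx
    · exact .inl (map_one _)
    · exact .inr ⟨(f a.1, a.2), by simp⟩
  have key1 : ∀ p m q, GPath E p m q →
      GPath (fun p y q => ∃ x, E p x q ∧ FreeGroup.map f x = y) p (FreeGroup.map f m) q := by
    intro p m q h
    induction h with
    | nil p => rw [map_one]; exact .nil _
    | cons h _ ih => rw [map_mul]; exact .cons ⟨_, h, rfl⟩ ih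
  have key2 : ∀ p m q, GPath (fun p y q => ∃ x, E p x q ∧ FreeGroup.map f x = y) p m q →
      ∃ x, GPath E p x q ∧ FreeGroup.map f x = m := by
    intro p m q h
    induction h with
    | nil p => exact ⟨1, .nil _, map_one _⟩
    | cons h _ ih =>
      obtain ⟨x, hx, rfl⟩ := h
      obtain ⟨y, hy, rfl⟩ := ih
      exact ⟨x * y, .cons hx hy, map_mul _ _ _⟩
  intro m
  constructor
  · rintro ⟨x, hx, rfl⟩
    obtain ⟨p, hp, q, hq, hpq⟩ := (h _).1 hx
    exact ⟨p, hp, q, hq, key1 _ _ _ hpq⟩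
  · rintro ⟨p, hp, q, hq, hpq⟩
    obtain ⟨x, hx, rfl⟩ := key2 _ _ _ hpq
    exact ⟨x, (h _).2 ⟨p, hp, q, hq, hx⟩, rfl⟩

/-- The fibres of the canonical map from the free group on a finite group `H` to `H` are rational:
the vertices of the graph are the elements of `H`. -/
theorem Rat.fiber {H : Type} [Group H] [Finite H] (h : H) :
    Rat {y : FreeGroup H | FreeGroup.lift id y = h} := by
  refine ⟨H, inferInstance, fun p x q => Lbl x ∧ q = p * FreeGroup.lift id x, {1}, {h},
    fun _ _ _ h => h.1, ?_⟩
  have key1 : ∀ p m q,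
      GPath (fun p x q => Lbl x ∧ q = p * FreeGroup.lift (id : H → H) x) p m q →
      q = p * FreeGroup.lift id m := by
    intro p m q h
    induction h with
    | nil p => simp
    | cons h _ ih => rw [ih, h.2, map_mul, mul_assoc]
  have key2 : ∀ (w : List (H × Bool)) (p : H),
      GPath (fun p x q => Lbl x ∧ q = p * FreeGroup.lift (id : H → H) x) p (mk w)
        (p * FreeGroup.lift id (mk w)) := by
    intro w
    induction w with
    | nil => intro p; simpa [← FreeGroup.one_eq_mk] using GPath.nil p
    | cons a w ih =>
      intro p
      have e : mk (a :: w) = mk [a] * mk w := by rw [FreeGroup.mul_mk]; rfl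
      rw [e, map_mul, ← mul_assoc]
      exact .cons ⟨.inr ⟨a, rfl⟩, rfl⟩ (ih _)
  intro m
  simp only [Set.mem_ofPred_eq, Set.mem_singleton_iff, exists_eq_left]
  constructor
  · rintro rfl
    obtain ⟨w, rfl⟩ := Quot.exists_rep m
    simpa using key2 w 1
  · intro h
    simpa using (key1 _ _ _ h).symm

/-! ### Regular languages and rational subsets -/

/-- The image of a regular language in the free group is rational. -/
theorem Rat.of_isRegular {B : Type} {L : Language (B × Bool)} (hL : L.IsRegular) :
    Rat (mk '' {w | w ∈ L}) := by
  obtain ⟨σ, hσ, M, rfl⟩ := hL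
  refine ⟨σ, Finite.of_fintype σ, fun p x q => ∃ a, x = mk [a] ∧ M.step p a = q,
    {M.start}, M.accept, fun _ _ _ ⟨a, h, _⟩ => .inr ⟨a, h⟩, ?_⟩
  have key1 : ∀ w p, GPath (fun p x q => ∃ a, x = mk [a] ∧ M.step p a = q) p (mk w)
      (M.evalFrom p w) := by
    intro w
    induction w with
    | nil => exact fun p => .nil p
    | cons a w ih =>
      intro p
      have e : mk (a :: w) = mk [a] * mk w := by rw [FreeGroup.mul_mk]; rfl
      rw [e]
      exact .cons ⟨a, rfl, rfl⟩ (ih _)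
  have key2 : ∀ p m q, GPath (fun p x q => ∃ a, x = mk [a] ∧ M.step p a = q) p m q →
      ∃ w, mk w = m ∧ M.evalFrom p w = q := by
    intro p m q h
    induction h with
    | nil p => exact ⟨[], rfl, rfl⟩
    | cons h _ ih =>
      obtain ⟨a, rfl, rfl⟩ := h
      obtain ⟨w, rfl, rfl⟩ := ih
      exact ⟨a :: w, by rw [FreeGroup.mul_mk]; rfl, rfl⟩
  intro m
  simp only [Set.mem_singleton_iff, exists_eq_left]
  constructor
  · rintro ⟨w, hw, rfl⟩
    exact ⟨_, hw, key1 w _⟩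
  · rintro ⟨q, hq, h⟩
    obtain ⟨w, rfl, rfl⟩ := key2 _ _ _ h
    exact ⟨w, hq, rfl⟩

/-- Over a finite alphabet, the words all of whose pairs of consecutive letters are related by `R`
form a regular language. -/
theorem isRegular_isChain {T : Type} [Finite T] (R : T → T → Prop) :
    Language.IsRegular ({w : List T | w.IsChain R} : Language T) := by
  classical
  -- `none` is the sink; `some none` the initial state; `some (some a)` records the last letter.
  let M : DFA T (Option (Option T)) :=
    { step := fun s b => match s with
        | none => none
        | some none => some (some b)
        | some (some a) => if R a b then some (some b) else none
      start := some none
      accept := {s | s ≠ none} }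
  have h0 : ∀ w, M.evalFrom none w = none := by
    intro w
    induction w with
    | nil => rfl
    | cons b w ih => exact ih
  have h1 : ∀ w a, M.evalFrom (some (some a)) w ≠ none ↔ (a :: w).IsChain R := by
    intro w
    induction w with
    | nil => intro a; simp
    | cons b w ih =>
      intro a
      rw [DFA.evalFrom_cons, List.isChain_cons_cons]
      by_cases h : R a b
      · have : M.step (some (some a)) b = some (some b) := if_pos h
        rw [this, ih]; simp [h]
      · have : M.step (some (some a)) b = none := if_neg h
        rw [this, h0]; simp [h]
  refine ⟨_, Fintype.ofFinite _, M, ?_⟩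
  ext w
  cases w with
  | nil => simp [DFA.mem_accepts, M]; exact List.isChain_nil
  | cons b w => exact h1 w b

/-- **Benois' theorem**: the reduced forms of the elements of a rational subset of a finitely
generated free group form a regular language. -/
theorem Rat.isRegular {B : Type} [Finite B] [DecidableEq B] {X : Set (FreeGroup B)} (hX : Rat X) :
    Language.IsRegular (FreeGroup.toWord '' X : Language (B × Bool)) := by
  obtain ⟨Q, hQ, E, I, J, hE, h⟩ := hX
  -- Saturation: a letter `a` may be read along any path whose label is `a` in the free group.
  let N : NFA (B × Bool) Q :=
    { step := fun p a => {q | GPath E p (mk [a]) q}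
      start := I
      accept := {q | ∃ t ∈ J, GPath E q 1 t} }
  have hcons : ∀ (a : B × Bool) w p, w ∈ N.acceptsFrom {p} → ∀ p', GPath E p' (mk [a]) p →
      a :: w ∈ N.acceptsFrom {p'} := by
    intro a w p hw p' hp
    rw [NFA.cons_mem_acceptsFrom, NFA.stepSet_singleton, NFA.mem_acceptsFrom]
    obtain ⟨s, hs, hs'⟩ := NFA.mem_acceptsFrom.1 hw
    exact ⟨s, hs, NFA.mem_evalFrom_iff_exists.2 ⟨p, hp, hs'⟩⟩
  have huncons : ∀ (a : B × Bool) w p, a :: w ∈ N.acceptsFrom {p} →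
      ∃ q, GPath E p (mk [a]) q ∧ w ∈ N.acceptsFrom {q} := by
    intro a w p hw
    rw [NFA.cons_mem_acceptsFrom, NFA.stepSet_singleton, NFA.mem_acceptsFrom] at hw
    obtain ⟨s, hs, hs'⟩ := hw
    obtain ⟨q, hq, hs'⟩ := NFA.mem_evalFrom_iff_exists.1 hs'
    exact ⟨q, hq, NFA.mem_acceptsFrom.2 ⟨s, hs, hs'⟩⟩
  have hone : ∀ w p p', GPath E p 1 p' → w ∈ N.acceptsFrom {p'} → w ∈ N.acceptsFrom {p} := by
    intro w p p' hp hw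
    cases w with
    | nil =>
      obtain ⟨s, rfl, t, ht, hst⟩ := N.nil_mem_acceptsFrom.1 hw
      exact N.nil_mem_acceptsFrom.2 ⟨p, rfl, t, ht, by simpa using hp.trans hst⟩
    | cons a w =>
      obtain ⟨q, hq, hw⟩ := huncons _ _ _ hw
      exact hcons _ _ _ hw _ (by simpa using hp.trans hq)
  have hsound : ∀ w p, w ∈ N.acceptsFrom {p} → ∃ q ∈ J, GPath E p (mk w) q := by
    intro w
    induction w with
    | nil =>
      intro p hw
      obtain ⟨s, rfl, t, ht, hst⟩ := N.nil_mem_acceptsFrom.1 hw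
      exact ⟨t, ht, hst⟩
    | cons a w ih =>
      intro p hw
      obtain ⟨q, hq, hw⟩ := huncons _ _ _ hw
      obtain ⟨t, ht, hqt⟩ := ih _ hw
      exact ⟨t, ht, by simpa [FreeGroup.mul_mk] using hq.trans hqt⟩
  have hcomplete : ∀ p m q, GPath E p m q → q ∈ J → m.toWord ∈ N.acceptsFrom {p} := by
    intro p m q hp hq
    induction hp with
    | nil p =>
      rw [FreeGroup.toWord_one]
      exact N.nil_mem_acceptsFrom.2 ⟨p, rfl, p, hq, .nil p⟩
    | @cons p q r x m e _ ih =>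
      have ih := ih hq
      obtain rfl | ⟨a, rfl⟩ := hE _ _ _ e
      · rw [one_mul]; exact hone _ _ _ (.single e) ih
      have e1 : (mk [a] * m).toWord = FreeGroup.reduce (a :: m.toWord) := by
        rw [← FreeGroup.toWord_mk]
        conv_lhs => rw [← FreeGroup.mk_toWord (x := m), FreeGroup.mul_mk]
        rfl
      rw [e1, FreeGroup.reduce.cons, FreeGroup.reduce_toWord]
      cases hm : m.toWord with
      | nil => rw [hm] at ih; exact hcons _ _ _ ih _ (.single e)
      | cons b w =>
        rw [hm] at ih
        dsimp only
        split_ifs with hab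
        · obtain ⟨q', hq', hw⟩ := huncons _ _ _ ih
          have : mk [a] * mk [b] = 1 := by
            obtain ⟨a1, a2⟩ := a
            obtain ⟨b1, b2⟩ := b
            dsimp only at hab
            obtain ⟨rfl, rfl⟩ := hab
            rw [FreeGroup.mul_mk, FreeGroup.one_eq_mk]
            exact Quot.sound (FreeGroup.Red.Step.not_rev (L₁ := []) (L₂ := []))
          exact hone _ _ _ (this ▸ (GPath.single e).trans hq') hw
        · exact hcons _ _ _ ih _ (.single e)
  have hN : N.accepts.IsRegular := ⟨_, Fintype.ofFinite _, N.toDFA, N.toDFA_correct⟩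
  have hR : Language.IsRegular ({w | FreeGroup.IsReduced w} : Language (B × Bool)) :=
    isRegular_isChain _
  have hacc : ∀ w, w ∈ N.accepts ↔ ∃ p ∈ I, w ∈ N.acceptsFrom {p} := by
    intro w
    rw [NFA.accepts_eq_acceptsFrom_start, NFA.mem_acceptsFrom]
    constructor
    · rintro ⟨s, hs, hs'⟩
      obtain ⟨q, hq, hs'⟩ := NFA.mem_evalFrom_iff_exists.1 hs'
      exact ⟨q, hq, NFA.mem_acceptsFrom.2 ⟨s, hs, hs'⟩⟩
    · rintro ⟨q, hq, hw⟩
      obtain ⟨s, hs, hs'⟩ := NFA.mem_acceptsFrom.1 hw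
      exact ⟨s, hs, NFA.mem_evalFrom_iff_exists.2 ⟨q, hq, hs'⟩⟩
  suffices hL : (FreeGroup.toWord '' X : Language (B × Bool)) =
      N.accepts ⊓ ({w | FreeGroup.IsReduced w} : Language (B × Bool)) by
    rw [hL]; exact hN.inf hR
  ext w
  constructor
  · rintro ⟨m, hm, rfl⟩
    obtain ⟨p, hp, q, hq, hpq⟩ := (h m).1 hm
    exact ⟨(hacc _).2 ⟨p, hp, hcomplete _ _ _ hpq hq⟩, FreeGroup.isReduced_toWord⟩
  · rintro ⟨hw, hr⟩
    obtain ⟨p, hp, hw⟩ := (hacc _).1 hw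
    obtain ⟨q, hq, hpq⟩ := hsound _ _ hw
    exact ⟨mk w, (h _).2 ⟨p, hp, q, hq, hpq⟩,
      by rw [FreeGroup.toWord_mk, FreeGroup.IsReduced.reduce_eq hr]⟩

/-! ### Alternating products over an amalgam -/

section Amalgam

theorem map_mul_mem_range {H G : Type} [Group H] [Group G] (f : H →* G) {h : H} {g : G} :
    f h * g ∈ f.range ↔ g ∈ f.range :=
  Subgroup.mul_mem_cancel_left _ (MonoidHom.mem_range.2 ⟨h, rfl⟩)

theorem mul_map_mem_range {H G : Type} [Group H] [Group G] (f : H →* G) {h : H} {g : G} :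
    g * f h ∈ f.range ↔ g ∈ f.range :=
  Subgroup.mul_mem_cancel_right _ (MonoidHom.mem_range.2 ⟨h, rfl⟩)

open Monoid (PushoutI)
open Monoid.PushoutI (of base)

variable {ι H F : Type} {G : ι → Type} [Group H] [∀ i, Group (G i)] [Group F]
  {φ : ∀ i, H →* G i}

/-- A subgroup `K` of `F` and subsets `D i` mapping onto the base group and onto the complements
of the base group in the factors `G i` of an amalgam, the `D i` being closed under inverses and
satisfying the triangle condition of a Stallings section as far as it makes sense. -/
structure Pieces (φ : ∀ i, H →* G i) (Φ : F →* PushoutI φ) (K : Subgroup F) (D : ι → Set F) :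
    Prop where
  K_val : ∀ k ∈ K, ∃ h, Φ k = base φ h
  K_rep : ∀ h, ∃ k ∈ K, Φ k = base φ h
  D_val : ∀ i, ∀ d ∈ D i, ∃ g, g ∉ (φ i).range ∧ Φ d = of i g
  D_rep : ∀ i g, g ∉ (φ i).range → ∃ d ∈ D i, Φ d = of i g
  D_inv : ∀ i, ∀ d ∈ D i, d⁻¹ ∈ D i
  D_tri : ∀ i, ∀ d ∈ D i, ∀ g g', g ∉ (φ i).range → g' ∉ (φ i).range → Φ d = of i (g * g') →
    ∃ a ∈ D i, Φ a = of i g ∧ a⁻¹ * d ∈ D i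

/-- `Alt K D i w`: `w` is a product `k₀ d₁ k₁ ⋯ dₙ kₙ` with `kₗ ∈ K` and `dₗ ∈ D jₗ`, where
consecutive indices `jₗ` are distinct, and `j₁` is different from `i` (if `i` is not `none`). -/
inductive Alt (K : Subgroup F) (D : ι → Set F) : Option ι → F → Prop
  | single (i : Option ι) (k : F) : k ∈ K → Alt K D i k
  | cons (i : Option ι) (k : F) (j : ι) (d w : F) : k ∈ K → some j ≠ i → d ∈ D j →
      Alt K D (some j) w → Alt K D i (k * d * w)

variable {Φ : F →* PushoutI φ} {K : Subgroup F} {D : ι → Set F}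

theorem Alt.left_mul {i : Option ι} {w k : F} (hw : Alt K D i w) (hk : k ∈ K) :
    Alt K D i (k * w) := by
  cases hw with
  | single _ _ h => exact .single _ _ (mul_mem hk h)
  | cons _ k' j d w h hj hd hw =>
    rw [← mul_assoc, ← mul_assoc]; exact .cons _ _ _ _ _ (mul_mem hk h) hj hd hw

theorem Alt.right_mul {i : Option ι} {w k : F} (hw : Alt K D i w) (hk : k ∈ K) :
    Alt K D i (w * k) := by
  induction hw with
  | single _ _ h => exact .single _ _ (mul_mem h hk)
  | cons _ k' j d w h hj hd _ ih => rw [mul_assoc]; exact .cons _ _ _ _ _ h hj hd ih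

theorem Alt.to_none {i : Option ι} {w : F} (hw : Alt K D i w) : Alt K D none w := by
  cases hw with
  | single _ _ h => exact .single _ _ h
  | cons _ k' j d w h hj hd hw => exact .cons _ _ _ _ _ h (by simp) hd hw

/-- Two alternating products may be joined through a syllable whose index both avoid. -/
theorem Alt.join (hP : Pieces φ Φ K D) {i : Option ι} {z : F} (hz : Alt K D i z) :
    ∀ (j : ι), i = some j → ∀ d ∈ D j, ∀ w, Alt K D (some j) w → Alt K D none (z⁻¹ * d * w) := by
  induction hz with
  | single i k hk =>
    rintro j rfl d hd w hw
    exact .cons _ _ _ _ _ (inv_mem hk) (by simp) hd hw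
  | cons i k l e z hk hl he _ ih =>
    rintro j rfl d hd w hw
    have := ih l rfl e⁻¹ (hP.D_inv _ _ he) (k⁻¹ * d * w)
      (.cons _ _ _ _ _ (inv_mem hk) (fun h => hl h.symm) hd hw)
    convert this using 1
    group

theorem Alt.inv (hP : Pieces φ Φ K D) {i : Option ι} {w : F} (hw : Alt K D i w) :
    Alt K D none w⁻¹ := by
  cases hw with
  | single _ _ h => exact .single _ _ (inv_mem h)
  | cons _ k j d w h hj hd hw =>
    convert hw.join hP j rfl _ (hP.D_inv _ _ hd) k⁻¹ (.single _ _ (inv_mem h)) using 1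
    group

/-- The value of an alternating product is a normal word whose first index obeys the same
restriction. -/
theorem Alt.normalWord (hP : Pieces φ Φ K D) (t : PushoutI.NormalWord.Transversal φ)
    {i : Option ι} {w : F} (hw : Alt K D i w) :
    ∃ n : PushoutI.NormalWord t, n.prod = Φ w ∧ (i ≠ none → n.toWord.fstIdx ≠ i) := by
  induction hw with
  | single i k hk =>
    obtain ⟨h, hh⟩ := hP.K_val k hk
    exact ⟨⟨.empty, h, by simp [Monoid.CoprodI.Word.empty]⟩,
      by simp [PushoutI.NormalWord.prod, hh],
      fun hi => by simpa [Monoid.CoprodI.Word.fstIdx, Monoid.CoprodI.Word.empty] using hi.symm⟩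
  | cons i k j d w hk hj hd _ ih =>
    obtain ⟨n, hn, hn'⟩ := ih
    obtain ⟨h, hh⟩ := hP.K_val k hk
    obtain ⟨g, hg, hdg⟩ := hP.D_val j d hd
    refine ⟨PushoutI.NormalWord.cons (φ j h * g) n (hn' (by simp)) ?_, ?_, fun _ => ?_⟩
    · rwa [map_mul_mem_range]
    · rw [PushoutI.NormalWord.prod_cons, hn, map_mul, map_mul, map_mul, hh, hdg,
        PushoutI.of_apply_eq_base]
    · simpa [PushoutI.NormalWord.cons, Monoid.CoprodI.Word.fstIdx] using hj

/-- A factor element outside the base group cannot relate two alternating products both of which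
avoid that factor in first position. -/
theorem Alt.mem_range (hφ : ∀ i, Function.Injective (φ i)) (hP : Pieces φ Φ K D)
    {j : ι} {z w : F} (hz : Alt K D (some j) z) (hw : Alt K D (some j) w) {x : G j}
    (hx : of j x * Φ z = Φ w) : x ∈ (φ j).range := by
  classical
  obtain ⟨t⟩ := PushoutI.NormalWord.transversal_nonempty φ hφ
  obtain ⟨n, hn, hn'⟩ := hz.normalWord hP t
  obtain ⟨m, hm, hm'⟩ := hw.normalWord hP t
  by_contra hxr
  have := PushoutI.NormalWord.prod_cons x n (hn' (by simp)) hxr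
  rw [hn, hx, ← hm] at this
  have := PushoutI.NormalWord.prod_injective this
  apply hm' (by simp)
  rw [← this]
  simp [PushoutI.NormalWord.cons, Monoid.CoprodI.Word.fstIdx]

/-- An alternating product with at least one syllable has its value outside the base group. -/
theorem Alt.not_base (hφ : ∀ i, Function.Injective (φ i)) (hP : Pieces φ Φ K D)
    {j : ι} {k d w : F} (hk : k ∈ K) (hd : d ∈ D j) (hw : Alt K D (some j) w) (h : H) :
    Φ (k * d * w) ≠ base φ h := by
  intro he
  obtain ⟨h', hh⟩ := hP.K_val k hk
  obtain ⟨g, hg, hdg⟩ := hP.D_val j d hd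
  obtain ⟨k', hk', hk'h⟩ := hP.K_rep h
  have := hw.mem_range hφ hP (x := φ j h' * g) (.single _ k' hk') (by
    rw [hk'h, ← he, map_mul, map_mul, map_mul, hh, hdg, PushoutI.of_apply_eq_base])
  rw [map_mul_mem_range] at this
  exact hg this

/-- Alternating products represent every element of the amalgam. -/
theorem Alt.exists_rep (hP : Pieces φ Φ K D) (p : PushoutI φ) : ∃ z, Alt K D none z ∧ Φ z = p := by
  have key : ∀ j (x : G j) z, Alt K D (some j) z → ∃ z', Alt K D none z' ∧ Φ z' = of j x * Φ z := by
    intro j x z hz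
    by_cases hx : x ∈ (φ j).range
    · obtain ⟨h, rfl⟩ := hx
      obtain ⟨k, hk, hkh⟩ := hP.K_rep h
      exact ⟨k * z, (hz.left_mul hk).to_none,
        by rw [map_mul, hkh, PushoutI.of_apply_eq_base]⟩
    · obtain ⟨d, hd, hdx⟩ := hP.D_rep j x hx
      exact ⟨1 * d * z, .cons _ _ _ _ _ (one_mem _) (by simp) hd hz, by simp [hdx]⟩
  suffices h : ∀ z, Alt K D none z → ∃ z', Alt K D none z' ∧ Φ z' = p * Φ z by
    simpa using h 1 (.single _ _ (one_mem _))
  induction p using PushoutI.induction_on with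
  | of j g =>
    intro z hz
    cases hz with
    | single _ _ hk => exact key j g z (.single _ _ hk)
    | cons _ k l d z hk _ hd hz =>
      by_cases hl : l = j
      · subst hl
        obtain ⟨h, hh⟩ := hP.K_val k hk
        obtain ⟨x, hx, hdx⟩ := hP.D_val l d hd
        obtain ⟨z', hz', e⟩ := key l (g * φ l h * x) z hz
        refine ⟨z', hz', ?_⟩
        rw [e, map_mul, map_mul, map_mul, map_mul, hh, hdx, PushoutI.of_apply_eq_base]
        simp only [mul_assoc]
      · exact key j g _ (.cons _ _ _ _ _ hk (by simpa using hl) hd hz)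
  | base h =>
    intro z hz
    obtain ⟨k, hk, hkh⟩ := hP.K_rep h
    exact ⟨k * z, hz.left_mul hk, by rw [map_mul, hkh]⟩
  | mul x y ihx ihy =>
    intro z hz
    obtain ⟨z₁, h₁, e₁⟩ := ihy z hz
    obtain ⟨z₂, h₂, e₂⟩ := ihx z₁ h₁
    exact ⟨z₂, h₂, by rw [e₂, e₁, mul_assoc]⟩

/-- The triangle condition for alternating products: `z` only prescribes the value of `u`, and
the proof follows the common prefix of the values of `z` and `w` in the Bass–Serre tree. -/
theorem Alt.triangle (hP : Pieces φ Φ K D) {i : Option ι} {z : F} (hz : Alt K D i z) :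
    ∀ w, Alt K D i w → ∃ u, Alt K D i u ∧ Φ u = Φ z ∧ Alt K D none (u⁻¹ * w) := by
  induction hz with
  | single i k hk =>
    intro w hw
    exact ⟨k, .single _ _ hk, rfl, (hw.left_mul (inv_mem hk)).to_none⟩
  | cons i k j d z hk hj hd hz ih =>
    intro w hw
    have hzz := Alt.cons i k j d z hk hj hd hz
    -- The case in which the first syllables lie in different factors.
    have hdiff : Alt K D (some j) w →
        ∃ u, Alt K D i u ∧ Φ u = Φ (k * d * z) ∧ Alt K D none (u⁻¹ * w) := by
      intro hw
      refine ⟨_, hzz, rfl, ?_⟩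
      convert hz.join hP j rfl _ (hP.D_inv _ _ hd) (k⁻¹ * w) (hw.left_mul (inv_mem hk)) using 1
      group
    cases hw with
    | single _ k' hk' => exact hdiff (.single _ _ hk')
    | cons _ k' j' d' w hk' hj' hd' hw =>
      by_cases hjj : j' = j
      swap
      · exact hdiff (.cons _ _ _ _ _ hk' (by simpa using hjj) hd' hw)
      subst hjj
      obtain ⟨h, hh⟩ := hP.K_val k hk
      obtain ⟨h', hh'⟩ := hP.K_val k' hk'
      obtain ⟨g, hg, hdg⟩ := hP.D_val j' d hd
      obtain ⟨g', hg', hdg'⟩ := hP.D_val j' d' hd'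
      -- `x` is the first syllable of `z`, read from the vertex reached after `k'`.
      set x : G j' := φ j' (h'⁻¹ * h) * g with hxdef
      have hx : x ∉ (φ j').range := by
        rwa [hxdef, map_mul_mem_range]
      have hofx : of j' x = (Φ k')⁻¹ * Φ k * Φ d := by
        rw [hxdef, map_mul, PushoutI.of_apply_eq_base, map_mul, map_inv, hh, hh', hdg]
      by_cases hy : x⁻¹ * g' ∈ (φ j').range
      · obtain ⟨y, hy⟩ := hy
        obtain ⟨c, hc, hcy⟩ := hP.K_rep y
        obtain ⟨u, hu, hue, huw⟩ := ih (c * w) (hw.left_mul hc)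
        have hval : Φ d' = (Φ k')⁻¹ * Φ k * Φ d * Φ c := by
          rw [← hofx, hcy, ← PushoutI.of_apply_eq_base φ j', ← map_mul, hy, hdg']; simp
        refine ⟨k' * d' * (c⁻¹ * u), .cons _ _ _ _ _ hk' hj' hd' (hu.left_mul (inv_mem hc)), ?_, ?_⟩
        · simp only [map_mul, map_inv, hval, hue]; group
        · convert huw using 1; group
      · obtain ⟨a, ha, hax, had⟩ := hP.D_tri j' d' hd' x (x⁻¹ * g') hx hy (by simpa using hdg')
        refine ⟨k' * a * z, .cons _ _ _ _ _ hk' hj' ha hz, ?_, ?_⟩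
        · simp only [map_mul, hax, hofx]; group
        · convert hz.join hP j' rfl _ had w hw using 1; group

end Amalgam

section AmalgamRat

open Monoid (PushoutI)
open Monoid.PushoutI (of base)

variable {ι H B : Type} {G : ι → Type} [Group H] [∀ i, Group (G i)]
  {φ : ∀ i, H →* G i} {Φ : FreeGroup B →* PushoutI φ} {K : Subgroup (FreeGroup B)}
  {D : ι → Set (FreeGroup B)}

/-- The alternating products form a rational set: they are read along the graph whose vertices are
the possible indices of the previous syllable. -/
theorem Alt.rat [Finite ι] (hK : Rat {k | k ∈ K}) (hD : ∀ i, Rat (D i)) :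
    Rat {w | Alt K D none w} := by
  refine ((Rat.graph (Q := Option ι) (ι := {e : Option ι × ι // some e.2 ≠ e.1})
    (fun e => e.1.1) (fun e => some e.1.2)
    (X := fun e => {m | ∃ x ∈ {k | k ∈ K}, ∃ y ∈ D e.1.2, m = x * y})
    (fun e => hK.mul (hD _)) {none} Set.univ).mul hK).congr ?_
  ext w
  simp only [Set.mem_ofPred_eq, Set.mem_singleton_iff, exists_eq_left, Set.mem_univ, true_and]
  constructor
  · rintro ⟨x, ⟨q, h⟩, k, hk, rfl⟩
    generalize (none : Option ι) = p at h ⊢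
    induction h with
    | nil p => rw [one_mul]; exact .single _ _ hk
    | cons h _ ih =>
      obtain ⟨⟨⟨p, j⟩, hj⟩, rfl, rfl, k', hk', d, hd, rfl⟩ := h
      rw [mul_assoc]
      exact .cons _ _ _ _ _ hk' hj hd ih
  · intro h
    generalize (none : Option ι) = p at h ⊢
    induction h with
    | single i k hk => exact ⟨1, ⟨i, .nil _⟩, k, hk, by simp⟩
    | cons i k j d w hk hj hd _ ih =>
      obtain ⟨x, ⟨q, hq⟩, k', hk', rfl⟩ := ih
      exact ⟨k * d * x, ⟨q, .cons ⟨⟨(i, j), hj⟩, rfl, rfl, k, hk, d, hd, rfl⟩ hq⟩, k', hk',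
        by simp only [mul_assoc]⟩

/-- The alternating products with a given value form a rational set: by the normal form theorem
there are only finitely many possibilities for the values of the successive syllables. -/
theorem Alt.rat_fiber [Finite H] (hφ : ∀ i, Function.Injective (φ i)) (hP : Pieces φ Φ K D)
    (hK : ∀ h, Rat {k | k ∈ K ∧ Φ k = base φ h})
    (hD : ∀ i g, g ∉ (φ i).range → Rat {d | d ∈ D i ∧ Φ d = of i g}) {i : Option ι}
    {z : FreeGroup B} (hz : Alt K D i z) : Rat {w | Alt K D i w ∧ Φ w = Φ z} := by
  induction hz with
  | single i k hk =>
    obtain ⟨h, hh⟩ := hP.K_val k hk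
    refine (hK h).congr ?_
    ext w
    simp only [Set.mem_ofPred_eq, hh]
    refine ⟨fun ⟨hw, e⟩ => ⟨.single _ _ hw, e⟩, fun ⟨hw, e⟩ => ⟨?_, e⟩⟩
    cases hw with
    | single _ _ hw => exact hw
    | cons _ k j d w hk hj hd hw => exact absurd e (Alt.not_base hφ hP hk hd hw h)
  | cons i k j d z hk hj hd hz ih =>
    obtain ⟨h, hh⟩ := hP.K_val k hk
    obtain ⟨g, hg, hdg⟩ := hP.D_val j d hd
    have hnot : ∀ a c : H, φ j a * g * φ j c ∉ (φ j).range := by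
      intro a c
      rwa [mul_map_mem_range,
        map_mul_mem_range]
    -- The value of `k' d' w` splits as `a`, `a⁻¹ h g c`, `c⁻¹ (Φ z)`, with `a` and `c` in the base.
    refine (Rat.iUnion (ι := H × H) (fun e => ((hK e.1).mul
      (hD j (φ j (e.1⁻¹ * h) * g * φ j e.2) (hnot _ _))).mul ((hK e.2⁻¹).mul ih))).congr ?_
    ext w
    simp only [Set.mem_iUnion, Set.mem_ofPred_eq, Prod.exists]
    constructor
    · rintro ⟨a, c, _, ⟨k₁, ⟨hk₁, e₁⟩, d', ⟨hd', e₂⟩, rfl⟩, _, ⟨k₂, ⟨hk₂, e₃⟩, w, ⟨hw, e₄⟩, rfl⟩,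
        rfl⟩
      refine ⟨.cons _ _ _ _ _ hk₁ hj hd' (hw.left_mul hk₂), ?_⟩
      simp only [map_mul, e₁, e₂, e₃, e₄, hh, hdg, PushoutI.of_apply_eq_base, map_inv]
      group
    · rintro ⟨hw, e⟩
      cases hw with
      | single _ _ hw =>
        obtain ⟨h', hh'⟩ := hP.K_val w hw
        exact absurd (e.symm.trans hh') (Alt.not_base hφ hP hk hd hz h')
      | cons _ k' j' d' w hk' hj' hd' hw =>
        obtain ⟨a, ha⟩ := hP.K_val k' hk'
        obtain ⟨g', hg', hdg'⟩ := hP.D_val j' d' hd'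
        have hjj : j' = j := by
          by_contra hne
          have := hz.mem_range hφ hP (x := φ j h * g)
            (.cons _ _ _ _ _ hk' (by simpa using hne) hd' hw)
            (by rw [e, map_mul, map_mul, map_mul, hh, hdg, PushoutI.of_apply_eq_base])
          rw [map_mul_mem_range] at this
          exact hg this
        subst hjj
        obtain ⟨c, hc⟩ := hz.mem_range hφ hP (x := (φ j' a * g')⁻¹ * (φ j' h * g)) hw (by
          simp only [map_mul, map_inv, PushoutI.of_apply_eq_base] at e ⊢
          rw [← ha, ← hh, ← hdg, ← hdg', mul_assoc, ← e]; group)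
        obtain ⟨k₂, hk₂, e₂⟩ := hP.K_rep c
        have hc' : g' = φ j' (a⁻¹ * h) * g * φ j' c⁻¹ := by
          rw [map_inv, hc, map_mul, map_inv]; group
        refine ⟨a, c⁻¹, k' * d', ⟨k', ⟨hk', ha⟩, d', ⟨hd', by rw [hdg', hc']⟩, rfl⟩,
          w, ⟨k₂, ⟨hk₂, by rw [e₂, inv_inv]⟩, k₂⁻¹ * w, ⟨hw.left_mul (inv_mem hk₂), ?_⟩, by group⟩,
          rfl⟩
        simp only [map_mul, map_inv] at e ⊢
        rw [e₂, ← PushoutI.of_apply_eq_base φ j', hc]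
        simp only [map_mul, map_inv, PushoutI.of_apply_eq_base]
        rw [← ha, ← hh, ← hdg, ← hdg']
        have : Φ w = (Φ k' * Φ d')⁻¹ * (Φ k * Φ d * Φ z) := by rw [← e]; group
        rw [this]; group

end AmalgamRat

/-! ### Stallings sections inside free groups -/

/-- A matched homomorphism `π'` evaluated at a word is a homomorphism of the free group `π`
evaluated at the class of that word, as soon as they agree on letters. -/
theorem ev_eq {α G : Type} [Group G] (π' : FreeMonoid (α × Bool) →* G) (π : FreeGroup α →* G)
    (h : ∀ a, π' (FreeMonoid.of a) = π (mk [a])) (w : Word α) : ev π' w = π (mk w) := by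
  induction w with
  | nil => exact (map_one π').trans (map_one π).symm
  | cons a w ih =>
    have e : mk (a :: w) = mk [a] * mk w := by rw [FreeGroup.mul_mk]; rfl
    rw [e, map_mul, ← ih, ← h]
    exact map_mul π' (FreeMonoid.of a) (FreeMonoid.ofList w)

theorem mk_redW {α : Type} (w : Word α) : mk (redW w) = mk w :=
  letI := Classical.decEq α
  FreeGroup.reduce.self

theorem mk_wordInv {α : Type} (w : Word α) : mk (wordInv w) = (mk w)⁻¹ :=
  FreeGroup.inv_mk.symm

/-- A section of `π : FreeGroup A → G` closed under inverses and satisfying the triangle condition,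
which is condition (S2) in terms of the free group. -/
structure IsFreeSection {A G : Type} [Group G] (π : FreeGroup A →* G) (S : Set (FreeGroup A)) :
    Prop where
  inv_mem : ∀ s ∈ S, s⁻¹ ∈ S
  exists_rep : ∀ g, ∃ s ∈ S, π s = g
  triangle : ∀ s ∈ S, ∀ g, ∃ u ∈ S, π u = g ∧ u⁻¹ * s ∈ S

/-- A Stallings section gives a free section with rational fibres; the rationality of the section
itself is recorded for the complement of any finite set of values. -/
theorem HasStallingsSection.exists_freeSection {G : Type} [Group G] (h : HasStallingsSection G) :
    ∃ (A : Type) (π : FreeGroup A →* G) (S : Set (FreeGroup A)), Finite A ∧ IsFreeSection π S ∧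
      (∀ X : Set G, X.Finite → Rat {s | s ∈ S ∧ π s ∉ X}) ∧
      ∀ g, Rat {s | s ∈ S ∧ π s = g} := by
  obtain ⟨A, π', L, hA, hπ, hL⟩ := h
  let π : FreeGroup A →* G := FreeGroup.lift fun a => π' (FreeMonoid.of (a, true))
  have hev : ∀ w, ev π' w = π (mk w) := by
    apply ev_eq
    rintro ⟨a, b⟩
    cases b
    · simpa [π] using hπ.matched a true
    · simp [π]
  refine ⟨A, π, mk '' {w | w ∈ L}, hA, ⟨?_, ?_, ?_⟩, ?_, ?_⟩
  · rintro _ ⟨w, hw, rfl⟩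
    exact ⟨_, hL.inv_mem w hw, mk_wordInv w⟩
  · intro g
    obtain ⟨w, hw, rfl⟩ := hL.exists_rep g
    exact ⟨_, ⟨w, hw, rfl⟩, (hev w).symm⟩
  · rintro _ ⟨w, hw, rfl⟩ g
    obtain ⟨v, hv, hvw⟩ := hL.s2 g (g⁻¹ * ev π' w) w ⟨hw, by simp⟩
    obtain ⟨u, ⟨hu, hug⟩, u', ⟨hu', -⟩, rfl⟩ := Language.mem_mul.1 hv
    refine ⟨mk u, ⟨u, hu, rfl⟩, (hev u).symm.trans hug, u', hu', ?_⟩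
    rw [← hvw, mk_redW, ← FreeGroup.mul_mk, inv_mul_cancel_left]
  · intro X hX
    have hXr : Language.IsRegular (sub L π' X) := by
      induction X, hX using Set.Finite.induction_on with
      | empty =>
        convert Language.IsRegular.inf hL.regular hL.regular.compl using 1
        ext w
        exact ⟨fun h => h.2.elim, fun h => (h.2 h.1).elim⟩
      | @insert g X _ _ ih =>
        convert (hL.s1 g).add ih using 1
        ext w
        rw [Language.mem_add]
        constructor
        · rintro ⟨hw, hg | hX⟩
          · exact .inl ⟨hw, hg⟩
          · exact .inr ⟨hw, hX⟩
        · rintro (⟨hw, hg⟩ | ⟨hw, hX⟩)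
          · exact ⟨hw, .inl hg⟩
          · exact ⟨hw, .inr hX⟩
    refine (Rat.of_isRegular (hL.regular.inf hXr.compl)).congr ?_
    ext s
    constructor
    · rintro ⟨w, ⟨hw, hwX⟩, rfl⟩
      exact ⟨⟨w, hw, rfl⟩, fun hX => hwX ⟨hw, by rwa [hev]⟩⟩
    · rintro ⟨⟨w, hw, rfl⟩, hX⟩
      exact ⟨w, ⟨hw, fun h => hX (by rw [← hev]; exact h.2)⟩, rfl⟩
  · intro g
    refine (Rat.of_isRegular (hL.s1 g)).congr ?_
    ext s
    constructor
    · rintro ⟨w, ⟨hw, hwg⟩, rfl⟩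
      exact ⟨⟨w, hw, rfl⟩, (hev w).symm.trans hwg⟩
    · rintro ⟨⟨w, hw, rfl⟩, hg⟩
      exact ⟨w, ⟨hw, (hev w).trans hg⟩, rfl⟩

/-- The converse translation: the reduced words of a rational free section with rational fibres form
a Stallings section. -/
theorem IsFreeSection.hasStallingsSection {A G : Type} [Group G] [Finite A] {π : FreeGroup A →* G}
    {S : Set (FreeGroup A)} (hS : IsFreeSection π S) (hr : Rat S)
    (hr1 : ∀ g, Rat {s | s ∈ S ∧ π s = g}) : HasStallingsSection G := by
  let _ := Classical.decEq A
  let π' : FreeMonoid (A × Bool) →* G := FreeMonoid.lift fun a => π (FreeGroup.mk [a])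
  have hev : ∀ w, ev π' w = π (FreeGroup.mk w) := ev_eq π' π fun a => by simp [π']
  have hev' : ∀ s : FreeGroup A, ev π' s.toWord = π s := fun s => by rw [hev, FreeGroup.mk_toWord]
  refine ⟨A, π', FreeGroup.toWord '' S, inferInstance, ⟨?_, ?_⟩, ⟨hr.isRegular, ?_, ?_, ?_, ?_, ?_⟩⟩
  · intro g
    obtain ⟨s, hs, rfl⟩ := hS.exists_rep g
    exact ⟨_, hev' s⟩
  · intro a b
    simp [π', ← map_inv, FreeGroup.inv_mk, FreeGroup.invRev]
  · rintro _ ⟨s, hs, rfl⟩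
    exact FreeGroup.reduce_toWord s
  · rintro _ ⟨s, hs, rfl⟩
    exact ⟨s⁻¹, hS.inv_mem s hs, FreeGroup.toWord_inv s⟩
  · intro g
    obtain ⟨s, hs, rfl⟩ := hS.exists_rep g
    exact ⟨_, ⟨s, hs, rfl⟩, hev' s⟩
  · intro g
    suffices hL : sub (FreeGroup.toWord '' S) π' {g} =
        (FreeGroup.toWord '' {s | s ∈ S ∧ π s = g} : Set (List (A × Bool))) by
      rw [hL]; exact (hr1 g).isRegular
    ext w
    constructor
    · rintro ⟨⟨s, hs, rfl⟩, hg⟩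
      exact ⟨s, ⟨hs, (hev' s).symm.trans hg⟩, rfl⟩
    · rintro ⟨s, ⟨hs, hg⟩, rfl⟩
      exact ⟨⟨s, hs, rfl⟩, (hev' s).trans hg⟩
  · rintro g h _ ⟨⟨s, hs, rfl⟩, hg⟩
    obtain ⟨u, hu, hug, hus⟩ := hS.triangle s hs g
    refine ⟨u.toWord ++ (u⁻¹ * s).toWord, Language.mem_mul.2 ⟨_, ⟨⟨u, hu, rfl⟩, (hev' u).trans hug⟩,
      _, ⟨⟨_, hus, rfl⟩, ?_⟩, rfl⟩, ?_⟩
    · have hg' : π s = g * h := (hev' s).symm.trans hg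
      show ev π' _ = h
      rw [hev', map_mul, map_inv, hug, hg', inv_mul_cancel_left]
    · exact (FreeGroup.toWord_mul _ _).symm.trans (by rw [mul_inv_cancel_left])

theorem HasStallingsSection.of_mulEquiv {G G' : Type} [Group G] [Group G'] (e : G ≃* G')
    (h : HasStallingsSection G) : HasStallingsSection G' := by
  obtain ⟨A, π, S, hA, hS, hX, h1⟩ := h.exists_freeSection
  refine IsFreeSection.hasStallingsSection (π := e.toMonoidHom.comp π) (S := S) ⟨hS.inv_mem, ?_, ?_⟩
    ((hX ∅ Set.finite_empty).congr (by simp)) fun g => (h1 (e.symm g)).congr ?_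
  · intro g
    obtain ⟨s, hs, h⟩ := hS.exists_rep (e.symm g)
    exact ⟨s, hs, by simp [h]⟩
  · intro s hs g
    obtain ⟨u, hu, h, h'⟩ := hS.triangle s hs (e.symm g)
    exact ⟨u, hu, by simp [h], h'⟩
  · ext s; simp [MulEquiv.eq_symm_apply]

/-! ### The section of an amalgam -/

/-- The amalgam of finitely many groups with Stallings sections over a finite group has a
Stallings section. -/
theorem hasStallingsSection_pushoutI {ι H : Type} {G : ι → Type} [Finite ι] [Group H] [Finite H]
    [∀ i, Group (G i)] (φ : ∀ i, H →* G i) (hφ : ∀ i, Function.Injective (φ i))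
    (hG : ∀ i, HasStallingsSection (G i)) : HasStallingsSection (Monoid.PushoutI φ) := by
  choose A π S hA hS hSX hS1 using fun i => (hG i).exists_freeSection
  let a (i : ι) : A i → (Σ i, A i) ⊕ H := fun x => .inl ⟨i, x⟩
  let Φ : FreeGroup ((Σ i, A i) ⊕ H) →* Monoid.PushoutI φ := FreeGroup.lift <|
    Sum.elim (fun x => Monoid.PushoutI.of x.1 (π x.1 (FreeGroup.of x.2))) (Monoid.PushoutI.base φ)
  let K : Subgroup (FreeGroup ((Σ i, A i) ⊕ H)) := (FreeGroup.map Sum.inr).range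
  let D (i : ι) : Set (FreeGroup ((Σ i, A i) ⊕ H)) :=
    FreeGroup.map (a i) '' {s | s ∈ S i ∧ π i s ∉ ((φ i).range : Set (G i))}
  have hΦa : ∀ i x, Φ (FreeGroup.map (a i) x) = Monoid.PushoutI.of i (π i x) := by
    intro i x
    have : Φ.comp (FreeGroup.map (a i)) = (Monoid.PushoutI.of i).comp (π i) := by
      ext x; simp [Φ, a]
    exact DFunLike.congr_fun this x
  have hΦH : ∀ y, Φ (FreeGroup.map Sum.inr y) =
      Monoid.PushoutI.base φ (FreeGroup.lift (id : H → H) y) := by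
    intro y
    have : Φ.comp (FreeGroup.map Sum.inr) =
        (Monoid.PushoutI.base φ).comp (FreeGroup.lift (id : H → H)) := by
      ext x; simp [Φ]
    exact DFunLike.congr_fun this y
  have hinj := Monoid.PushoutI.of_injective hφ
  have hP : Pieces φ Φ K D :=
    { K_val := by
        rintro _ ⟨y, rfl⟩
        exact ⟨_, hΦH y⟩
      K_rep := fun h => ⟨FreeGroup.map Sum.inr (FreeGroup.of h), ⟨_, rfl⟩, by simp [Φ]⟩
      D_val := by
        rintro i _ ⟨s, ⟨-, hs⟩, rfl⟩
        exact ⟨_, hs, hΦa i s⟩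
      D_rep := by
        intro i g hg
        obtain ⟨s, hs, rfl⟩ := (hS i).exists_rep g
        exact ⟨_, ⟨s, ⟨hs, hg⟩, rfl⟩, hΦa i s⟩
      D_inv := by
        rintro i _ ⟨s, ⟨hs, hs'⟩, rfl⟩
        refine ⟨s⁻¹, ⟨(hS i).inv_mem s hs, ?_⟩, map_inv _ _⟩
        rw [map_inv]
        exact fun h => hs' (inv_mem_iff.1 h)
      D_tri := by
        rintro i _ ⟨s, ⟨hs, -⟩, rfl⟩ g g' hg hg' e
        rw [hΦa] at e
        obtain ⟨u, hu, rfl, hus⟩ := (hS i).triangle s hs g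
        refine ⟨_, ⟨u, ⟨hu, hg⟩, rfl⟩, hΦa i u, u⁻¹ * s, ⟨hus, ?_⟩, by simp⟩
        rwa [map_mul, map_inv, hinj i e, inv_mul_cancel_left] }
  have hK1 : ∀ h, Rat {k | k ∈ K ∧ Φ k = Monoid.PushoutI.base φ h} := by
    intro h
    refine ((Rat.fiber h).map Sum.inr).congr ?_
    ext k
    constructor
    · rintro ⟨y, rfl, rfl⟩
      exact ⟨⟨y, rfl⟩, hΦH y⟩
    · rintro ⟨⟨y, rfl⟩, hy⟩
      exact ⟨y, Monoid.PushoutI.base_injective hφ ((hΦH y).symm.trans hy), rfl⟩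
  have hK : Rat {k | k ∈ K} := by
    refine (Rat.iUnion hK1).congr ?_
    ext k
    simp only [Set.mem_iUnion, Set.mem_ofPred_eq, exists_and_left, and_iff_left_iff_imp]
    exact hP.K_val k
  have hD : ∀ i, Rat (D i) := fun i => (hSX i _ (Set.finite_range (φ i))).map (a i)
  have hD1 : ∀ i g, g ∉ (φ i).range → Rat {d | d ∈ D i ∧ Φ d = Monoid.PushoutI.of i g} := by
    intro i g hg
    refine ((hS1 i g).map (a i)).congr ?_
    ext d
    constructor
    · rintro ⟨s, ⟨hs, rfl⟩, rfl⟩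
      exact ⟨⟨s, ⟨hs, hg⟩, rfl⟩, hΦa i s⟩
    · rintro ⟨⟨s, ⟨hs, -⟩, rfl⟩, e⟩
      exact ⟨s, ⟨hs, hinj i ((hΦa i s).symm.trans e)⟩, rfl⟩
  refine IsFreeSection.hasStallingsSection (π := Φ) (S := {w | Alt K D none w})
    ⟨fun s hs => Alt.inv hP hs, Alt.exists_rep hP, fun s hs g => ?_⟩ (Alt.rat hK hD) fun g => ?_
  · obtain ⟨z, hz, rfl⟩ := Alt.exists_rep hP g
    exact hz.triangle hP s hs
  · obtain ⟨z, hz, rfl⟩ := Alt.exists_rep hP g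
    exact hz.rat_fiber hφ hP hK1 hD1

end Stallings

open Stallings in
/-- If `G₁` and `G₂` have Stallings sections, `H` is a finite group,
`φ₁ : H → G₁`, `φ₂ : H → G₂` are injective homomorphisms, and `P` (with structure
maps `ι₁, ι₂`) is the amalgamated free product `G₁ *_H G₂`, i.e. the pushout of
`φ₁` and `φ₂`, then `P` also has a Stallings section. -/
theorem hasStallingsSection_amalgam {G₁ G₂ H P : Type}
    [Group G₁] [Group G₂] [Group H] [Group P] [Finite H]
    (hG₁ : HasStallingsSection G₁) (hG₂ : HasStallingsSection G₂)
    (φ₁ : H →* G₁) (φ₂ : H →* G₂)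
    (hφ₁ : Function.Injective φ₁) (hφ₂ : Function.Injective φ₂)
    (ι₁ : G₁ →* P) (ι₂ : G₂ →* P) (hcomm : ι₁.comp φ₁ = ι₂.comp φ₂)
    (huniv : ∀ (X : Type) [Group X] (f₁ : G₁ →* X) (f₂ : G₂ →* X),
      f₁.comp φ₁ = f₂.comp φ₂ →
        ∃! f : P →* X, f.comp ι₁ = f₁ ∧ f.comp ι₂ = f₂) :
    HasStallingsSection P := by
  let G : Bool → Type := fun b => match b with | false => G₁ | true => G₂
  let _ : ∀ b, Group (G b) := fun b => match b with
    | false => inferInstanceAs (Group G₁)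
    | true => inferInstanceAs (Group G₂)
  let φ : ∀ b, H →* G b := fun b => match b with | false => φ₁ | true => φ₂
  have hQ : HasStallingsSection (Monoid.PushoutI φ) :=
    hasStallingsSection_pushoutI φ (by rintro (_ | _) <;> assumption)
      (by rintro (_ | _) <;> assumption)
  let j₁ : G₁ →* Monoid.PushoutI φ := Monoid.PushoutI.of (φ := φ) false
  let j₂ : G₂ →* Monoid.PushoutI φ := Monoid.PushoutI.of (φ := φ) true
  obtain ⟨f, ⟨hf₁, hf₂⟩, -⟩ := huniv (Monoid.PushoutI φ) j₁ j₂
    ((Monoid.PushoutI.of_comp_eq_base (φ := φ) false).trans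
      (Monoid.PushoutI.of_comp_eq_base (φ := φ) true).symm)
  let k : ∀ b, G b →* P := fun b => match b with | false => ι₁ | true => ι₂
  have hk : ∀ b, (k b).comp (φ b) = ι₁.comp φ₁ := by
    rintro (_ | _)
    exacts [rfl, hcomm.symm]
  let r : Monoid.PushoutI φ →* P := Monoid.PushoutI.lift k (ι₁.comp φ₁) hk
  have hr₁ : r.comp j₁ = ι₁ := MonoidHom.ext fun x =>
    Monoid.PushoutI.lift_of (φ := φ) k (ι₁.comp φ₁) hk (i := false) x
  have hr₂ : r.comp j₂ = ι₂ := MonoidHom.ext fun x =>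
    Monoid.PushoutI.lift_of (φ := φ) k (ι₁.comp φ₁) hk (i := true) x
  have hrf : r.comp f = MonoidHom.id P :=
    (huniv P ι₁ ι₂ hcomm).unique
      ⟨by rw [MonoidHom.comp_assoc, hf₁, hr₁], by rw [MonoidHom.comp_assoc, hf₂, hr₂]⟩
      ⟨MonoidHom.id_comp _, MonoidHom.id_comp _⟩
  have hfr : f.comp r = MonoidHom.id _ := by
    apply Monoid.PushoutI.hom_ext_nonempty
    rintro (_ | _)
    · show (f.comp r).comp j₁ = j₁
      rw [MonoidHom.comp_assoc, hr₁, hf₁]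
    · show (f.comp r).comp j₂ = j₂
      rw [MonoidHom.comp_assoc, hr₂, hf₂]
  exact hQ.of_mulEquiv (MonoidHom.toMulEquiv r f hfr hrf)
end

section
/- Let K be a group that has a Stallings section, let H be a finite subgroup of K, and let φ : H → K be an injective group homomorphism. Then the HNN extension HNN(K, H, φ) = ⟨K, t ∣ t h t⁻¹ = hφ (h ∈ H)⟩ also has a Stallings section. -/
/-! ### Closure properties of regular languages -/

namespace StallingsHNN

open Stallings HNNExtension

/-- Myhill–Nerode in the form used below: a language lying in a finite family of languages that is
stable under left quotients by letters is regular. -/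
theorem isRegular_of_family {β : Type} (F : Set (Language β)) (hF : F.Finite)
    (h : ∀ L ∈ F, ∀ b : β, L.leftQuotient [b] ∈ F) {L : Language β} (hL : L ∈ F) :
    L.IsRegular := by
  apply Language.IsRegular.of_finite_range_leftQuotient
  refine hF.subset ?_
  rintro _ ⟨x, rfl⟩
  induction x using List.reverseRecOn with
  | nil => simpa using hL
  | append_singleton x a ih =>
    rw [Language.leftQuotient_append]
    exact h _ ih a

theorem leftQuotient_mem_range {β : Type} {L M : Language β}
    (h : M ∈ Set.range L.leftQuotient) (b : β) :
    M.leftQuotient [b] ∈ Set.range L.leftQuotient := by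
  obtain ⟨x, rfl⟩ := h
  exact ⟨x ++ [b], Language.leftQuotient_append L x [b]⟩

theorem isRegular_empty {β : Type} : (∅ : Language β).IsRegular :=
  isRegular_of_family {∅} (Set.finite_singleton _)
    (by
      rintro L rfl b
      exact Set.mem_singleton_iff.2 (by ext x; exact Iff.rfl)) rfl

theorem isRegular_congr {β : Type} {L M : Language β} (h : M.IsRegular)
    (e : ∀ w, w ∈ L ↔ w ∈ M) : L.IsRegular := by
  rwa [Language.ext e]

theorem isRegular_iUnion {β ι : Type} [Finite ι] (f : ι → Language β)
    (hf : ∀ i, (f i).IsRegular) : Language.IsRegular ({w | ∃ i, w ∈ f i} : Language β) := by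
  have key : ∀ s : Set ι, s.Finite →
      Language.IsRegular ({w | ∃ i ∈ s, w ∈ f i} : Language β) := by
    intro s hs
    induction s, hs using Set.Finite.induction_on with
    | empty =>
      refine isRegular_congr (isRegular_empty (β := β)) fun w => ?_
      constructor
      · rintro ⟨i, hi, _⟩
        exact hi.elim
      · intro h
        exact h.elim
    | @insert a s _ _ ih =>
      refine isRegular_congr ((hf a).add ih) fun w => ?_
      refine Iff.trans ?_ (Language.mem_add _ _ _).symm
      constructor
      · rintro ⟨i, hi, hw⟩
        rcases hi with rfl | hi
        · exact Or.inl hw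
        · exact Or.inr ⟨i, hi, hw⟩
      · rintro (hw | ⟨i, hi, hw⟩)
        · exact ⟨a, Set.mem_insert _ _, hw⟩
        · exact ⟨i, Set.mem_insert_of_mem _ hi, hw⟩
  refine isRegular_congr (key Set.univ Set.finite_univ) fun w => ?_
  constructor
  · rintro ⟨i, hw⟩
    exact ⟨i, Set.mem_univ i, hw⟩
  · rintro ⟨i, _, hw⟩
    exact ⟨i, hw⟩

/-! ### Words over the enlarged alphabet -/

variable {α K : Type}

/-- The sign of an exponent `±1`, in the encoding of letters by Booleans: the letter
`(none, sgn e)` stands for `t ^ e`. -/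
def sgn (e : ℤˣ) : Bool := decide (e = 1)

@[simp] theorem sgn_one : sgn 1 = true := rfl
@[simp] theorem sgn_neg_one : sgn (-1) = false := rfl

theorem sgn_neg (e : ℤˣ) : sgn (-e) = !sgn e := by
  rcases Int.units_eq_one_or e with rfl | rfl <;> simp

theorem sgn_injective : Function.Injective sgn := by
  intro e f h
  rcases Int.units_eq_one_or e with rfl | rfl <;> rcases Int.units_eq_one_or f with rfl | rfl <;>
    simp_all

theorem eq_neg_of_ne {e f : ℤˣ} (h : e ≠ f) : e = -f := by
  rcases Int.units_eq_one_or e with rfl | rfl <;> rcases Int.units_eq_one_or f with rfl | rfl <;>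
    simp_all

/-- A word over `α`, read over `Option α`; the new letter `none` is the stable letter `t`. -/
def emb (x : Word α) : Word (Option α) := x.map fun p => (some p.1, p.2)

@[simp] theorem emb_nil : emb ([] : Word α) = [] := rfl
@[simp] theorem emb_cons (p : α × Bool) (x : Word α) :
    emb (p :: x) = (some p.1, p.2) :: emb x := rfl
@[simp] theorem emb_append (x y : Word α) : emb (x ++ y) = emb x ++ emb y := List.map_append

theorem emb_injective : Function.Injective (emb : Word α → Word (Option α)) := by
  apply List.map_injective_iff.2
  rintro ⟨a, b⟩ ⟨c, d⟩ h
  simpa using h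

/-- The word `t ^ e₁ y₁ t ^ e₂ y₂ ⋯` of a list of pairs `(eᵢ, yᵢ)`. -/
def tl (l : List (ℤˣ × Word α)) : Word (Option α) :=
  l.flatMap fun p => (none, sgn p.1) :: emb p.2

/-- The word `x t ^ e₁ y₁ t ^ e₂ y₂ ⋯`. -/
def form (x : Word α) (l : List (ℤˣ × Word α)) : Word (Option α) := emb x ++ tl l

@[simp] theorem tl_nil : tl ([] : List (ℤˣ × Word α)) = [] := rfl

theorem tl_cons (p : ℤˣ × Word α) (l : List (ℤˣ × Word α)) :
    tl (p :: l) = (none, sgn p.1) :: form p.2 l := rfl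

@[simp] theorem form_nil (x : Word α) : form x [] = emb x := by simp [form]

theorem form_cons (x : Word α) (p : ℤˣ × Word α) (l : List (ℤˣ × Word α)) :
    form x (p :: l) = emb x ++ (none, sgn p.1) :: form p.2 l := rfl

theorem wordInv_append (u v : Word α) : wordInv (u ++ v) = wordInv v ++ wordInv u := by
  simp [wordInv]

theorem wordInv_emb (x : Word α) : wordInv (emb x) = emb (wordInv x) := by
  simp [wordInv, emb, letterInv]

theorem mk_wordInv (x : Word α) : FreeGroup.mk (wordInv x) = (FreeGroup.mk x)⁻¹ := by
  rw [FreeGroup.inv_mk]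
  rfl

theorem reduced_iff {w : Word α} : w ∈ (Reduced : Language (α × Bool)) ↔ FreeGroup.IsReduced w := by
  classical
  rw [FreeGroup.isReduced_iff_reduce_eq]
  change redW w = w ↔ _
  unfold redW
  constructor <;> intro h <;> convert h

theorem redW_eq_of_mk {u w : Word α} (hw : w ∈ (Reduced : Language (α × Bool)))
    (h : FreeGroup.mk u = FreeGroup.mk w) : redW u = w := by
  let _ := Classical.decEq α
  have h2 : redW w = w := hw
  rw [← h2]
  exact FreeGroup.reduce.sound h

theorem mk_redW (u : Word α) : FreeGroup.mk (redW u) = FreeGroup.mk u := by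
  let _ := Classical.decEq α
  exact FreeGroup.reduce.self

theorem mk_emb (x : Word α) :
    FreeGroup.mk (emb x) = FreeGroup.map some (FreeGroup.mk x) := rfl

section ev

variable {G : Type} [Group G] (π : FreeMonoid (α × Bool) →* G)

@[simp] theorem ev_nil : ev π [] = 1 := map_one π

@[simp] theorem ev_append (u v : Word α) : ev π (u ++ v) = ev π u * ev π v := map_mul π _ _

theorem ev_cons (a : α × Bool) (v : Word α) :
    ev π (a :: v) = π (FreeMonoid.of a) * ev π v :=
  map_mul π (FreeMonoid.of a) (FreeMonoid.ofList v)

theorem ev_wordInv (hπ : IsMEpi π) (w : Word α) : ev π (wordInv w) = (ev π w)⁻¹ := by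
  induction w with
  | nil => simp [wordInv]
  | cons a w ih =>
    have : wordInv (a :: w) = wordInv w ++ [letterInv a] := by simp [wordInv]
    rw [this, ev_append, ih, ev_cons, ev_cons, mul_inv_rev, ev_nil, mul_one]
    congr 1
    exact hπ.matched a.1 a.2

end ev

/-! ### Words of Britton form -/

variable [Group K] (A B : Subgroup K) (φ : A ≃* B)
  (π : FreeMonoid (α × Bool) →* K) (S : Language (α × Bool))

/-- Consecutive blocks `t ^ e y`, `t ^ f z` with no cancellation: if `y` represents an element that
can be moved across `t ^ e`, then `e = f`. -/
def NoCancel (a b : ℤˣ × Word α) : Prop := ev π a.2 ∈ toSubgroup A B a.1 → a.1 = b.1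

/-- The word `form x l` is Britton reduced and its `α`-blocks all lie in `S`. -/
structure IsForm (x : Word α) (l : List (ℤˣ × Word α)) : Prop where
  head : x ∈ S
  mem : ∀ p ∈ l, p.2 ∈ S
  chain : l.IsChain (NoCancel A B π)

/-- The section of the HNN extension: Britton reduced words with blocks in `S`. -/
def britton : Language (Option α × Bool) := {w | ∃ x l, w = form x l ∧ IsForm A B π S x l}

/-- The letters of `Option α`, evaluated in the HNN extension. -/
def letterVal : Option α × Bool → HNNExtension K A B φ
  | (some a, b) => of (π (FreeMonoid.of (a, b)))
  | (none, true) => t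
  | (none, false) => t⁻¹

/-- The extension of `π` to the HNN extension, sending the new letter to `t`. -/
def piHNN : FreeMonoid (Option α × Bool) →* HNNExtension K A B φ :=
  FreeMonoid.lift (letterVal A B φ π)

variable {A B π S}

theorem ev_piHNN_cons (a : Option α × Bool) (w : Word (Option α)) :
    ev (piHNN A B φ π) (a :: w) = letterVal A B φ π a * ev (piHNN A B φ π) w := by
  rw [ev_cons]
  rfl

theorem letterVal_none (e : ℤˣ) :
    letterVal A B φ π (none, sgn e) = (t : HNNExtension K A B φ) ^ (e : ℤ) := by
  rcases Int.units_eq_one_or e with rfl | rfl <;> simp [letterVal]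

@[simp] theorem ev_emb (x : Word α) :
    ev (piHNN A B φ π) (emb x) = of (ev π x) := by
  induction x with
  | nil => simp
  | cons a x ih =>
    rw [emb_cons, ev_piHNN_cons, ih, ev_cons, map_mul]
    rfl

theorem ev_cat (x : Word α) (e : ℤˣ) (w : Word (Option α)) :
    ev (piHNN A B φ π) (emb x ++ (none, sgn e) :: w)
      = of (ev π x) * (t ^ (e : ℤ) * ev (piHNN A B φ π) w) := by
  rw [ev_append, ev_piHNN_cons, ev_emb, letterVal_none]

theorem ev_form_cons (x : Word α) (p : ℤˣ × Word α) (l : List (ℤˣ × Word α)) :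
    ev (piHNN A B φ π) (form x (p :: l))
      = of (ev π x) * (t ^ (p.1 : ℤ) * ev (piHNN A B φ π) (form p.2 l)) := ev_cat φ x p.1 _

/-- The Britton reduced word of the HNN extension underlying a word of Britton form. -/
def IsForm.toReducedWord {x : Word α} {l : List (ℤˣ × Word α)} (h : IsForm A B π S x l) :
    NormalWord.ReducedWord K A B where
  head := ev π x
  toList := l.map fun p => (p.1, ev π p.2)
  chain := by
    rw [List.isChain_map]
    exact h.chain

theorem IsForm.tail {x : Word α} {p : ℤˣ × Word α} {l : List (ℤˣ × Word α)}
    (h : IsForm A B π S x (p :: l)) : IsForm A B π S p.2 l :=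
  ⟨h.mem p (by simp), fun q hq => h.mem q (by simp [hq]), (List.isChain_cons.1 h.chain).2⟩

theorem IsForm.prod_toReducedWord {x : Word α} {l : List (ℤˣ × Word α)}
    (h : IsForm A B π S x l) : h.toReducedWord.prod φ = ev (piHNN A B φ π) (form x l) := by
  suffices H : ∀ (l : List (ℤˣ × Word α)) (x : Word α), of (ev π x) *
      ((l.map fun p => (p.1, ev π p.2)).map
        (fun x => (t : HNNExtension K A B φ) ^ (x.1 : ℤ) * of x.2)).prod
      = ev (piHNN A B φ π) (form x l) from H l x
  intro l
  induction l with
  | nil => intro x; simp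
  | cons p l ih =>
    intro x
    rw [ev_form_cons, ← ih]
    simp [mul_assoc]

/-- In the convention of `HNNExtension`, `t ^ e` conjugates `toSubgroup A B e` onto
`toSubgroup A B (-e)`. -/
theorem exists_conj (e : ℤˣ) {c : K} (hc : c ∈ toSubgroup A B (-e)) :
    ∃ d ∈ toSubgroup A B e,
      (of c * t ^ (e : ℤ) : HNNExtension K A B φ) = t ^ (e : ℤ) * of d := by
  rcases Int.units_eq_one_or e with rfl | rfl
  · exact ⟨φ.symm ⟨c, hc⟩, (φ.symm ⟨c, hc⟩).2, by simpa using of_mul_t (φ := φ) ⟨c, hc⟩⟩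
  · rw [neg_neg] at hc
    exact ⟨φ ⟨c, hc⟩, (φ ⟨c, hc⟩).2, by simpa using of_mul_inv_t (φ := φ) ⟨c, hc⟩⟩

/-- Uniqueness of Britton forms: two words of Britton form with the same value have the same first
exponent, and their heads differ by an element that can be moved across it. -/
theorem IsForm.unique {x x' : Word α} {p : ℤˣ × Word α} {l l' : List (ℤˣ × Word α)}
    (h : IsForm A B π S x (p :: l)) (h' : IsForm A B π S x' l')
    (heq : ev (piHNN A B φ π) (form x' l') = ev (piHNN A B φ π) (form x (p :: l))) :
    ∃ y' l'', l' = (p.1, y') :: l'' ∧ (ev π x)⁻¹ * ev π x' ∈ toSubgroup A B (-p.1) := by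
  have key := ReducedWord.map_fst_eq_and_of_prod_eq φ
    (w₁ := h.toReducedWord) (w₂ := h'.toReducedWord)
    (by rw [h.prod_toReducedWord, h'.prod_toReducedWord, heq])
  obtain ⟨k1, k2⟩ := key
  have k2' := k2 p.1 (by simp [IsForm.toReducedWord])
  cases l' with
  | nil => simp [IsForm.toReducedWord] at k1
  | cons q l' =>
    obtain ⟨f, y'⟩ := q
    simp only [IsForm.toReducedWord, List.map_cons, List.cons.injEq] at k1
    obtain ⟨rfl, _⟩ := k1
    exact ⟨y', l', rfl, k2'⟩

theorem IsForm.unique_nil {x x' : Word α} {l' : List (ℤˣ × Word α)}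
    (h : IsForm A B π S x []) (h' : IsForm A B π S x' l')
    (heq : ev (piHNN A B φ π) (form x' l') = ev (piHNN A B φ π) (form x [])) :
    l' = [] ∧ ev π x' = ev π x := by
  cases l' with
  | nil =>
    refine ⟨rfl, ?_⟩
    rw [form_nil, form_nil, ev_emb, ev_emb] at heq
    exact of_injective φ heq
  | cons q l' =>
    obtain ⟨_, _, h1, _⟩ := h'.unique φ h heq.symm
    cases h1

/-! ### Multiplying by the stable letter -/

variable (A B π S) in
/-- The element `g` of the HNN extension does not begin with a cancelling `t ^ (-e)`: multiplying
it on the left by `t ^ e` makes its Britton forms longer. -/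
def Good (e : ℤˣ) (g : HNNExtension K A B φ) : Prop :=
  ∀ x l, IsForm A B π S x l → ev (piHNN A B φ π) (form x l) = g →
    ∀ q ∈ l.head?, ev π x ∈ toSubgroup A B e → e = q.1

/-- It suffices to check `Good` on a single Britton form, by uniqueness. -/
theorem good_of_isForm {e : ℤˣ} {x : Word α} {l : List (ℤˣ × Word α)}
    (h : IsForm A B π S x l) (hl : ∀ q ∈ l.head?, ev π x ∈ toSubgroup A B e → e = q.1) :
    Good A B φ π S e (ev (piHNN A B φ π) (form x l)) := by
  intro x' l' h' heq q hq hx'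
  cases l' with
  | nil => simp at hq
  | cons p' l' =>
    obtain rfl : p' = q := by simpa using hq
    obtain ⟨y, l'', rfl, hy⟩ := h'.unique φ h heq.symm
    have hl' := hl (p'.1, y) (by simp)
    by_contra hne
    have he := eq_neg_of_ne hne
    rw [← he] at hy
    apply hne
    apply hl'
    have := mul_mem hx' hy
    simpa using this

theorem IsForm.good {x : Word α} {p : ℤˣ × Word α} {l : List (ℤˣ × Word α)}
    (h : IsForm A B π S x (p :: l)) :
    Good A B φ π S p.1 (ev (piHNN A B φ π) (form p.2 l)) :=
  good_of_isForm φ h.tail fun q hq hx => (List.isChain_cons.1 h.chain).1 q hq hx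

theorem IsForm.replace_head {x x' : Word α} {l : List (ℤˣ × Word α)} (h : IsForm A B π S x l)
    (hx' : x' ∈ S) : IsForm A B π S x' l := ⟨hx', h.mem, h.chain⟩

theorem ev_form_replace {x x' : Word α} {l : List (ℤˣ × Word α)} {c : K}
    (hx : ev π x' = c * ev π x) :
    ev (piHNN A B φ π) (form x' l) = of c * ev (piHNN A B φ π) (form x l) := by
  simp [form, hx, mul_assoc]

theorem Good.of_mul (hS : IsStallingsSection π S) {e : ℤˣ} {g : HNNExtension K A B φ}
    (h : Good A B φ π S e g) {d : K} (hd : d ∈ toSubgroup A B e) :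
    Good A B φ π S e (of d * g) := by
  intro x l hx heq q hq hxe
  obtain ⟨x2, hx2, hx2'⟩ := hS.exists_rep (d⁻¹ * ev π x)
  refine h x2 l (hx.replace_head hx2) ?_ q hq ?_
  · rw [ev_form_replace φ hx2', heq]
    simp
  · rw [hx2']
    exact mul_mem (inv_mem hd) hxe

theorem IsForm.cons {x y : Word α} {e : ℤˣ} {l : List (ℤˣ × Word α)} (hx : x ∈ S)
    (h : IsForm A B π S y l) (hg : Good A B φ π S e (ev (piHNN A B φ π) (form y l))) :
    IsForm A B π S x ((e, y) :: l) := by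
  refine ⟨hx, ?_, ?_⟩
  · intro p hp
    rcases List.mem_cons.1 hp with rfl | hp
    · exact h.head
    · exact h.mem p hp
  · rw [List.isChain_cons]
    exact ⟨fun q hq hy => hg y l h rfl q hq hy, h.chain⟩

theorem cons_mem_britton {x : Word α} {e : ℤˣ} {w : Word (Option α)} (hx : x ∈ S)
    (hw : w ∈ britton A B π S) (hg : Good A B φ π S e (ev (piHNN A B φ π) w)) :
    emb x ++ (none, sgn e) :: w ∈ britton A B π S := by
  obtain ⟨y, l, rfl, h⟩ := hw
  exact ⟨x, (e, y) :: l, rfl, IsForm.cons φ hx h hg⟩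

/-- Existence of Britton forms with blocks in `S`. -/
theorem exists_isForm (hS : IsStallingsSection π S) (g : HNNExtension K A B φ) :
    ∃ x l, IsForm A B π S x l ∧ ev (piHNN A B φ π) (form x l) = g := by
  obtain ⟨d⟩ := NormalWord.TransversalPair.nonempty K A B
  obtain ⟨w, rfl⟩ := (NormalWord.equiv φ d).symm.surjective g
  choose rep hrep hev using hS.exists_rep
  have h : IsForm A B π S (rep w.head) (w.toList.map fun p => (p.1, rep p.2)) := by
    refine ⟨hrep _, ?_, ?_⟩
    · intro p hp
      obtain ⟨q, _, rfl⟩ := List.mem_map.1 hp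
      exact hrep _
    · rw [List.isChain_map]
      simpa [NoCancel, hev] using w.chain
  refine ⟨_, _, h, ?_⟩
  rw [← h.prod_toReducedWord]
  change _ = w.prod φ
  simp [NormalWord.ReducedWord.prod, IsForm.toReducedWord, hev, Function.comp_def]

theorem isMEpi_piHNN (hπ : IsMEpi π) (hS : IsStallingsSection π S) :
    IsMEpi (piHNN A B φ π) where
  surjective g := by
    obtain ⟨x, l, _, h⟩ := exists_isForm φ hS g
    exact ⟨_, h⟩
  matched a b := by
    have hl : ∀ p, piHNN A B φ π (FreeMonoid.of p) = letterVal A B φ π p := fun p =>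
      FreeMonoid.lift_eval_of _ _
    rw [hl, hl]
    cases a with
    | none => cases b <;> simp [letterVal]
    | some a => simp [letterVal, hπ.matched]

/-- Any word of `britton` representing `k t ^ e g` splits at its first stable letter, and the two
parts represent `k` and `g` up to moving an element of the associated subgroup across `t ^ e`. -/
theorem britton_split (hS : IsStallingsSection π S) {w : Word (Option α)}
    (hw : w ∈ britton A B π S) {k : K} {e : ℤˣ} {g : HNNExtension K A B φ}
    (hg : Good A B φ π S e g)
    (heq : ev (piHNN A B φ π) w = of k * (t ^ (e : ℤ) * g)) :
    ∃ x ∈ S, ∃ y ∈ britton A B π S, w = emb x ++ (none, sgn e) :: y ∧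
      ∃ c ∈ toSubgroup A B (-e), ev π x = k * c ∧
        of c * (t ^ (e : ℤ) * ev (piHNN A B φ π) y) = t ^ (e : ℤ) * g := by
  obtain ⟨x', l', rfl, h'⟩ := hw
  obtain ⟨x, hx, rfl⟩ := hS.exists_rep k
  obtain ⟨y, l, h, rfl⟩ := exists_isForm φ hS g
  have h2 : IsForm A B π S x ((e, y) :: l) := IsForm.cons φ hx h hg
  obtain ⟨y', l'', rfl, hc⟩ := h2.unique φ h' (by rw [heq, ev_form_cons])
  refine ⟨x', h'.head, form y' l'', ⟨y', l'', rfl, h'.tail⟩, rfl, _, hc, by simp, ?_⟩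
  rw [ev_form_cons] at heq
  rw [map_mul, mul_assoc, heq, map_inv, inv_mul_cancel_left]

/-! ### Inversion and reducedness -/

theorem wordInv_cat (x : Word α) (e : ℤˣ) (w : Word (Option α)) :
    wordInv (emb x ++ (none, sgn e) :: w)
      = wordInv w ++ (none, sgn (-e)) :: emb (wordInv x) := by
  rw [sgn_neg, ← wordInv_emb]
  simp [wordInv, letterInv]

/-- The inverse of a word of Britton form can be followed by any Britton form list `acc`, as long
as the junction does not cancel. -/
theorem inv_append (hπ : IsMEpi π) (hS : IsStallingsSection π S) (l : List (ℤˣ × Word α)) :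
    ∀ (x : Word α) (acc : List (ℤˣ × Word α)), IsForm A B π S x l →
      (∀ p ∈ acc, p.2 ∈ S) → acc.IsChain (NoCancel A B π) →
      (∀ p ∈ l.head?, ∀ q ∈ acc.head?, ev π x ∈ toSubgroup A B (-p.1) → -p.1 = q.1) →
      ∃ x' l', IsForm A B π S x' l' ∧ form x' l' = wordInv (form x l) ++ tl acc := by
  induction l with
  | nil =>
    intro x acc h hacc hch _
    exact ⟨wordInv x, acc, ⟨hS.inv_mem x h.head, hacc, hch⟩, by simp [form, wordInv_emb]⟩
  | cons p l ih =>
    obtain ⟨e, y⟩ := p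
    intro x acc h hacc hch hlink
    have hmem : ∀ p ∈ (-e, wordInv x) :: acc, p.2 ∈ S := by
      intro q hq
      rcases List.mem_cons.1 hq with rfl | hq
      · exact hS.inv_mem x h.head
      · exact hacc q hq
    have hchain : ((-e, wordInv x) :: acc).IsChain (NoCancel A B π) := by
      rw [List.isChain_cons]
      refine ⟨fun q hq hx => ?_, hch⟩
      dsimp only at hx
      rw [ev_wordInv π hπ, inv_mem_iff] at hx
      exact hlink (e, y) (by simp) q hq hx
    obtain ⟨x', l', h1, h2⟩ := ih y ((-e, wordInv x) :: acc) h.tail hmem hchain (by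
      intro q hq q' hq' hy
      obtain rfl : (-e, wordInv x) = q' := by simpa using hq'
      by_contra hne
      have he : q.1 ≠ e := fun h => hne (by rw [h])
      have he' := eq_neg_of_ne he
      rw [he', neg_neg] at hy
      exact he ((List.isChain_cons.1 h.chain).1 q hq hy).symm)
    refine ⟨x', l', h1, ?_⟩
    rw [h2, form_cons, wordInv_cat, tl_cons]
    simp [form]

theorem wordInv_mem_britton (hπ : IsMEpi π) (hS : IsStallingsSection π S) {w : Word (Option α)}
    (hw : w ∈ britton A B π S) : wordInv w ∈ britton A B π S := by
  obtain ⟨x, l, rfl, h⟩ := hw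
  obtain ⟨x', l', h', heq⟩ := inv_append hπ hS l x [] h (by simp) List.isChain_nil (by simp)
  exact ⟨x', l', by simpa using heq.symm, h'⟩

theorem isReduced_emb {x : Word α} (h : FreeGroup.IsReduced x) :
    FreeGroup.IsReduced (emb x) := by
  unfold FreeGroup.IsReduced emb at *
  rw [List.isChain_map]
  refine h.imp fun a b hab h' => hab ?_
  simpa using h'

theorem britton_reduced (hS : IsStallingsSection π S) :
    britton A B π S ⊆ (Reduced : Language (Option α × Bool)) := by
  rintro _ ⟨x, l, rfl, h⟩
  rw [reduced_iff]
  induction l generalizing x with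
  | nil =>
    rw [form_nil]
    exact isReduced_emb (reduced_iff.1 (hS.reduced x h.head))
  | cons p l ih =>
    obtain ⟨e, y⟩ := p
    have hy := ih y h.tail
    rw [form_cons]
    unfold FreeGroup.IsReduced
    rw [List.isChain_append]
    refine ⟨isReduced_emb (reduced_iff.1 (hS.reduced x h.head)), ?_, ?_⟩
    · rw [List.isChain_cons]
      refine ⟨?_, hy⟩
      intro q hq hq1
      dsimp only at *
      cases y with
      | cons a y =>
        have : (some a.1, a.2) = q := by simpa [form] using hq
        subst this
        simp at hq1
      | nil =>
        cases l with
        | nil => simp at hq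
        | cons p' l =>
          have : (none, sgn p'.1) = q := by simpa [form_cons] using hq
          subst this
          have hc := (List.isChain_cons.1 h.chain).1 p' (by simp)
          have he : e = p'.1 := hc (by simp [one_mem])
          rw [he]
    · intro a ha b hb hab
      have hb' : (none, sgn e) = b := by simpa using hb
      subst hb'
      have ha' := List.mem_of_mem_getLast? ha
      obtain ⟨c, _, rfl⟩ := List.mem_map.1 ha'
      simp at hab

/-! ### The triangle property -/

/-- The triangle property when the first factor lies in the base group. -/
theorem triangle_base (hS : IsStallingsSection π S) (k : K) (g : HNNExtension K A B φ)
    {w : Word (Option α)} (hw : w ∈ britton A B π S)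
    (heq : ev (piHNN A B φ π) w = of k * g) :
    ∃ u ∈ S, ∃ v ∈ britton A B π S, ev π u = k ∧ ev (piHNN A B φ π) v = g ∧
      FreeGroup.mk (emb u) * FreeGroup.mk v = FreeGroup.mk w := by
  obtain ⟨x, l, rfl, h⟩ := hw
  obtain ⟨_, ⟨u, hu, v, hv, rfl⟩, hr⟩ := hS.s2 k (k⁻¹ * ev π x) x
    ⟨h.head, by simp⟩
  have hu2 : ev π u = k := hu.2
  have hv2 : ev π v = k⁻¹ * ev π x := hv.2
  refine ⟨u, hu.1, form v l, ⟨v, l, rfl, h.replace_head hv.1⟩, hu2, ?_, ?_⟩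
  · rw [ev_form_replace φ hv2, heq]
    simp
  · have : FreeGroup.mk u * FreeGroup.mk v = FreeGroup.mk x := by
      rw [FreeGroup.mul_mk, ← mk_redW]
      exact congrArg FreeGroup.mk hr
    rw [form, form, ← FreeGroup.mul_mk, ← FreeGroup.mul_mk, ← mul_assoc]
    congr 1
    rw [mk_emb, mk_emb, mk_emb, ← this, map_mul]

theorem mk_cat (u v : Word (Option α)) (e : ℤˣ) :
    FreeGroup.mk (u ++ (none, sgn e) :: v)
      = FreeGroup.mk u * (FreeGroup.mk [(none, sgn e)] * FreeGroup.mk v) := by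
  simp [FreeGroup.mul_mk]

theorem mk_sgn_neg (e : ℤˣ) :
    (FreeGroup.mk [(none, sgn (-e))] : FreeGroup (Option α))
      = (FreeGroup.mk [(none, sgn e)])⁻¹ := by
  rw [FreeGroup.inv_mk, sgn_neg]
  rfl

/-- The triangle property, by induction on the Britton form of the first factor `k t ^ e g₁`.
If `t ^ e` survives in the product, `w` is cut at this letter and induction applies to `g₁`. If it
cancels, so does all of `g₁`, and only the block of `k` meets what is left of the second factor. -/
theorem triangle (hπ : IsMEpi π) (hS : IsStallingsSection π S) (l : List (ℤˣ × Word α)) :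
    ∀ (x : Word α), IsForm A B π S x l → ∀ (g : HNNExtension K A B φ) (w : Word (Option α)),
      w ∈ britton A B π S →
      ev (piHNN A B φ π) w = ev (piHNN A B φ π) (form x l) * g →
      ∃ u ∈ britton A B π S, ∃ v ∈ britton A B π S,
        ev (piHNN A B φ π) u = ev (piHNN A B φ π) (form x l) ∧ ev (piHNN A B φ π) v = g ∧
        FreeGroup.mk u * FreeGroup.mk v = FreeGroup.mk w := by
  induction l with
  | nil =>
    intro x h g w hw heq
    rw [form_nil, ev_emb] at heq
    obtain ⟨u, hu, v, hv, h1, h2, h3⟩ := triangle_base φ hS _ g hw heq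
    refine ⟨emb u, ⟨u, [], by simp, hu, by simp, List.isChain_nil⟩, v, hv, ?_, h2, h3⟩
    rw [form_nil, ev_emb, ev_emb, h1]
  | cons p l ih =>
    obtain ⟨e, y⟩ := p
    intro x h g w hw heq
    have hg1 := h.good φ
    have htail := h.tail
    dsimp only at hg1 htail
    rw [ev_form_cons] at heq ⊢
    dsimp only at heq ⊢
    set g1 := ev (piHNN A B φ π) (form y l) with hg1def
    by_cases hgood : Good A B φ π S e (g1 * g)
    -- The letter `t ^ e` survives: `w = x' t ^ e w'`, and `w'` is handled by induction.
    · obtain ⟨x', hx', w', hw', rfl, c, hc, hxc, hcw⟩ := britton_split φ hS hw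
        (k := ev π x) hgood
        (by rw [heq]; simp only [mul_assoc])
      obtain ⟨d, hd, hcd⟩ := exists_conj φ e hc
      have hw1 : ev (piHNN A B φ π) w' = (of d⁻¹ * g1) * g := by
        rw [← mul_assoc, hcd, mul_assoc, mul_right_inj] at hcw
        rw [mul_assoc, ← hcw]
        simp
      obtain ⟨y2, hy2, hy2'⟩ := hS.exists_rep (d⁻¹ * ev π y)
      have hform : ev (piHNN A B φ π) (form y2 l) = of d⁻¹ * g1 := ev_form_replace φ hy2'
      obtain ⟨u, hu, v, hv, h1, h2, h3⟩ := ih y2 (htail.replace_head hy2) g w' hw'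
        (by rw [hw1, hform])
      refine ⟨emb x' ++ (none, sgn e) :: u, ?_, v, hv, ?_, h2, ?_⟩
      · refine cons_mem_britton φ hx' hu ?_
        rw [h1, hform]
        exact hg1.of_mul φ hS (inv_mem hd)
      · rw [ev_cat, h1, hform, hxc, map_mul, mul_assoc, ← mul_assoc (of c), hcd]
        simp [mul_assoc]
      · rw [mk_cat, mk_cat, ← h3]
        simp only [mul_assoc]
    -- The letter `t ^ e` cancels: `g₁ g = q₀ t ^ (-e) r` with `q₀` movable across `t ^ e`.
    · unfold Good at hgood
      push Not at hgood
      obtain ⟨q0, l0, hq0, hq0ev, ⟨f, q1⟩, hf, hq0e, hne⟩ := hgood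
      cases l0 with
      | nil => simp at hf
      | cons p0 l2 =>
      obtain rfl : p0 = (f, q1) := by simpa using hf
      obtain rfl : f = -e := by rw [eq_neg_of_ne hne, neg_neg]
      have hgr := hq0.good φ
      rw [ev_form_cons] at hq0ev
      dsimp only at hq0ev hgr
      set r := ev (piHNN A B φ π) (form q1 l2) with hr
      obtain ⟨b, hb, hqb⟩ := exists_conj (φ := φ) (-e) (c := ev π q0) (by rwa [neg_neg])
      have hw0 : ev (piHNN A B φ π) w = of (ev π x) * (of b * r) := by
        rw [heq, mul_assoc, mul_assoc, ← hq0ev, ← mul_assoc (of (ev π q0)), hqb]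
        simp [mul_assoc]
      -- The only use of the triangle property of `K` in this case: `w` is equivalent to `u v`,
      -- where `u` represents `k` and `v` represents `b r`.
      obtain ⟨u, hu, v, hv, h1, h2, h3⟩ := triangle_base φ hS _ _ hw hw0
      obtain ⟨z, l3, rfl, hz⟩ := hv
      have hgz : Good A B φ π S (-e) (ev (piHNN A B φ π) (form z l3)) := by
        rw [h2]
        exact hgr.of_mul φ hS hb
      have hacc := IsForm.cons φ hz.head hz hgz
      obtain ⟨x', l', hx', hxl⟩ := inv_append hπ hS l y ((-e, z) :: l3) htail hacc.mem
        hacc.chain (by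
          intro p hp q hq hy
          obtain rfl : (-e, z) = q := by simpa using hq
          by_contra hne'
          have hne2 : p.1 ≠ e := fun h => hne' (by rw [h])
          rw [eq_neg_of_ne hne2, neg_neg] at hy
          exact hne2 ((List.isChain_cons.1 h.chain).1 p hp hy).symm)
      rw [tl_cons] at hxl
      -- The factors are `u t ^ e y ⋯` and `(y ⋯)⁻¹ t ^ (-e) v`, whose product reduces to `u v`.
      refine ⟨form u ((e, y) :: l), ⟨u, _, rfl, h.replace_head hu⟩, form x' l',
        ⟨x', l', rfl, hx'⟩, ?_, ?_, ?_⟩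
      · rw [ev_form_cons, h1]
      · have hinv : ev (piHNN A B φ π) (wordInv (form y l)) = g1⁻¹ :=
          ev_wordInv _ (isMEpi_piHNN φ hπ hS) _
        rw [hxl, ev_append, ev_piHNN_cons, letterVal_none, h2, hinv]
        rw [inv_mul_eq_iff_eq_mul, ← hq0ev, ← mul_assoc, ← hqb, mul_assoc]
      · rw [hxl, form_cons, mk_cat, mk_cat, ← h3, mk_wordInv, mk_sgn_neg]
        simp only [mul_assoc, mul_inv_cancel_left]

/-! ### Regularity -/

theorem leftQuotient_mem_of_forall_notMem {L : Language (Option α × Bool)} {b : Option α × Bool}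
    {F : Set (Language (Option α × Bool))} (hF : (∅ : Language (Option α × Bool)) ∈ F)
    (h : ∀ w, b :: w ∉ L) : L.leftQuotient [b] ∈ F := by
  have : L.leftQuotient [b] = ∅ := Language.ext fun w => iff_of_false (h w) fun h' => h'.elim
  rwa [this]

theorem isRegular_emb {L : Language (α × Bool)} (h : L.IsRegular) :
    Language.IsRegular ({w | ∃ x ∈ L, w = emb x} : Language (Option α × Bool)) := by
  have hfin := h.finite_range_leftQuotient
  let E : Language (α × Bool) → Language (Option α × Bool) := fun L => {w | ∃ x ∈ L, w = emb x}
  refine isRegular_of_family (insert ∅ (E '' Set.range L.leftQuotient))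
    ((hfin.image _).insert _) ?_ (Or.inr ⟨L, ⟨[], rfl⟩, rfl⟩)
  rintro M (rfl | ⟨N, hN, rfl⟩) b
  · exact leftQuotient_mem_of_forall_notMem (Or.inl rfl) fun w hw => hw.elim
  · obtain ⟨a, b⟩ := b
    cases a with
    | none =>
      refine leftQuotient_mem_of_forall_notMem (Or.inl rfl) ?_
      rintro w ⟨x, _, hx⟩
      cases x <;> simp at hx
    | some a =>
      refine Or.inr ⟨N.leftQuotient [(a, b)], leftQuotient_mem_range hN _, ?_⟩
      refine Language.ext fun w => ⟨?_, ?_⟩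
      · rintro ⟨x, hx, rfl⟩
        exact ⟨(a, b) :: x, hx, rfl⟩
      · rintro ⟨x, hx, hxw⟩
        cases x with
        | nil => simp at hxw
        | cons p x =>
          obtain ⟨⟨rfl, rfl⟩, rfl⟩ : (a = p.1 ∧ b = p.2) ∧ w = emb x := by simpa using hxw
          exact ⟨x, hx, rfl⟩

/-- The words `x t ^ e w` with `x ∈ L` and `w ∈ M`, where `s` encodes the sign of `e`. -/
def cat (s : Bool) (M : Language (Option α × Bool)) (L : Language (α × Bool)) :
    Language (Option α × Bool) :=
  {w | ∃ x ∈ L, ∃ y ∈ M, w = emb x ++ (none, s) :: y}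

theorem isRegular_cat {s : Bool} {M : Language (Option α × Bool)} {L : Language (α × Bool)}
    (hL : L.IsRegular) (hM : M.IsRegular) : (cat s M L).IsRegular := by
  have hfin := hL.finite_range_leftQuotient
  refine isRegular_of_family
    (insert ∅ (cat s M '' Set.range L.leftQuotient ∪ Set.range M.leftQuotient))
    (((hfin.image _).union hM.finite_range_leftQuotient).insert _) ?_
    (Or.inr (Or.inl ⟨L, ⟨[], rfl⟩, rfl⟩))
  rintro P (rfl | ⟨N, hN, rfl⟩ | hP) b
  · exact leftQuotient_mem_of_forall_notMem (Or.inl rfl) fun w hw => hw.elim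
  · obtain ⟨a, b⟩ := b
    cases a with
    | none =>
      by_cases hb : b = s ∧ [] ∈ N
      · obtain ⟨rfl, hnil⟩ := hb
        have : (cat b M N).leftQuotient [(none, b)] = M := by
          refine Language.ext fun w => ⟨?_, ?_⟩
          · rintro ⟨x, hx, y, hy, hxy⟩
            cases x with
            | nil =>
              obtain rfl : w = y := by simpa using hxy
              exact hy
            | cons p x => simp at hxy
          · intro hw
            exact ⟨[], hnil, w, hw, rfl⟩
        rw [this]
        exact Or.inr (Or.inr ⟨[], rfl⟩)
      · refine leftQuotient_mem_of_forall_notMem (Or.inl rfl) ?_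
        rintro w ⟨x, hx, y, hy, hxy⟩
        cases x with
        | nil =>
          obtain ⟨rfl, rfl⟩ : b = s ∧ w = y := by simpa using hxy
          exact hb ⟨rfl, hx⟩
        | cons p x => simp at hxy
    | some a =>
      refine Or.inr (Or.inl ⟨N.leftQuotient [(a, b)], leftQuotient_mem_range hN _, ?_⟩)
      refine Language.ext fun w => ⟨?_, ?_⟩
      · rintro ⟨x, hx, y, hy, rfl⟩
        exact ⟨(a, b) :: x, hx, y, hy, rfl⟩
      · rintro ⟨x, hx, y, hy, hxy⟩
        cases x with
        | nil => simp at hxy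
        | cons p x =>
          obtain ⟨⟨rfl, rfl⟩, rfl⟩ :
              (a = p.1 ∧ b = p.2) ∧ w = emb x ++ (none, s) :: y := by simpa using hxy
          exact ⟨x, hx, y, hy, rfl⟩
  · exact Or.inr (Or.inr (leftQuotient_mem_range hP b))

variable (A B π S) in
/-- The states of an automaton for `britton`. Here `p` is the exponent of the last stable letter
read (if any), and `L`, `M e` are the quotients of `S` and of the words of `S` with value in
`toSubgroup A B e`, by the part of the current block read so far. -/
def state (q : Option ℤˣ × Language (α × Bool) × (ℤˣ → Language (α × Bool))) :
    Language (Option α × Bool) :=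
  {w | ∃ x l, w = form x l ∧ x ∈ q.2.1 ∧ (∀ p ∈ l, p.2 ∈ S) ∧ l.IsChain (NoCancel A B π) ∧
    ∀ e ∈ q.1, ∀ p ∈ l.head?, x ∈ q.2.2 e → e = p.1}

variable (A B π S) in
/-- The words of `S` whose value can be moved across `t ^ e`. -/
def subS (e : ℤˣ) : Language (α × Bool) := sub S π (toSubgroup A B e : Set K)

/-- The section is regular. Whether a junction `t ^ e y t ^ f` is allowed depends only on `e`, `f`
and on whether `y` lies in `subS A B π S e`, so an automaton reading `y` in `S` and in the two
languages `subS` at once, and remembering `e`, recognizes `britton`. -/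
theorem britton_isRegular (hS : S.IsRegular) (hsub : ∀ e, (subS A B π S e).IsRegular) :
    (britton A B π S).IsRegular := by
  let Q : Set (Option ℤˣ × Language (α × Bool) × (ℤˣ → Language (α × Bool))) :=
    Set.univ ×ˢ (Set.range S.leftQuotient ×ˢ
      Set.univ.pi fun e => Set.range (subS A B π S e).leftQuotient)
  have hpi : (Set.univ.pi fun e => Set.range (subS A B π S e).leftQuotient).Finite :=
    (Set.Finite.pi' fun e => (hsub e).finite_range_leftQuotient).subset
      fun f hf e => hf e (Set.mem_univ e)
  have hQ : Q.Finite := Set.finite_univ.prod (hS.finite_range_leftQuotient.prod hpi)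
  have hstart : ∀ p, (p, S, subS A B π S) ∈ Q := fun p =>
    ⟨Set.mem_univ _, ⟨[], rfl⟩, fun e _ => ⟨[], rfl⟩⟩
  refine isRegular_of_family (insert ∅ (state A B π S '' Q)) ((hQ.image _).insert _) ?_
    (Or.inr ⟨_, hstart none, Language.ext fun w => ⟨?_, ?_⟩⟩)
  · rintro P (rfl | ⟨⟨p, L, M⟩, ⟨_, hL, hM⟩, rfl⟩) b
    · exact leftQuotient_mem_of_forall_notMem (Or.inl rfl) fun w hw => hw.elim
    obtain ⟨a, b⟩ := b
    cases a with
    | none =>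
      by_cases hb : [] ∈ L ∧ ∀ e ∈ p, [] ∈ M e → sgn e = b
      · obtain ⟨hnil, hlink⟩ := hb
        obtain ⟨e, rfl⟩ : ∃ e, sgn e = b := by
          cases b
          · exact ⟨-1, rfl⟩
          · exact ⟨1, rfl⟩
        refine Or.inr ⟨_, hstart (some e), Language.ext fun w => ⟨?_, ?_⟩⟩
        · rintro ⟨x, l, rfl, hx, hl, hch, hlk⟩
          refine ⟨[], (e, x) :: l, rfl, hnil, ?_, ?_, ?_⟩
          · intro q hq
            rcases List.mem_cons.1 hq with rfl | hq
            · exact hx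
            · exact hl q hq
          · rw [List.isChain_cons]
            exact ⟨fun q hq hxe => hlk e rfl q hq ⟨hx, hxe⟩, hch⟩
          · intro f hf q hq hM'
            obtain rfl : (e, x) = q := by simpa using hq
            exact sgn_injective (hlink f hf hM')
        · rintro ⟨x, l, hw, hx, hl, hch, hlk⟩
          cases x with
          | cons a x => simp [form] at hw
          | nil =>
            cases l with
            | nil => simp at hw
            | cons q l =>
              obtain ⟨hq, rfl⟩ : sgn e = sgn q.1 ∧ w = form q.2 l := by
                simpa [form_cons] using hw
              obtain rfl := sgn_injective hq
              refine ⟨q.2, l, rfl, hl q (by simp), fun r hr => hl r (by simp [hr]),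
                (List.isChain_cons.1 hch).2, ?_⟩
              intro f hf r hr hM'
              obtain rfl : q.1 = f := by simpa using hf
              exact (List.isChain_cons.1 hch).1 r hr hM'.2
      · refine leftQuotient_mem_of_forall_notMem (Or.inl rfl) ?_
        rintro w ⟨x, l, hw, hx, hl, hch, hlk⟩
        cases x with
        | cons a x => simp [form] at hw
        | nil =>
          cases l with
          | nil => simp at hw
          | cons q l =>
            obtain ⟨rfl, rfl⟩ : b = sgn q.1 ∧ w = form q.2 l := by
              simpa [form_cons] using hw
            exact hb ⟨hx, fun e he hM' => congrArg sgn (hlk e he q (by simp) hM')⟩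
    | some a =>
      refine Or.inr ⟨(p, L.leftQuotient [(a, b)], fun e => (M e).leftQuotient [(a, b)]),
        ⟨Set.mem_univ _, leftQuotient_mem_range hL _, fun e he =>
          leftQuotient_mem_range (hM e he) _⟩, Language.ext fun w => ⟨?_, ?_⟩⟩
      · rintro ⟨x, l, rfl, hx, hl, hch, hlk⟩
        exact ⟨(a, b) :: x, l, rfl, hx, hl, hch, hlk⟩
      · rintro ⟨x, l, hw, hx, hl, hch, hlk⟩
        cases x with
        | nil =>
          cases l with
          | nil => simp at hw
          | cons q l => simp [form_cons] at hw
        | cons c x =>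
          obtain ⟨⟨rfl, rfl⟩, rfl⟩ : (a = c.1 ∧ b = c.2) ∧ w = form x l := by
            simpa [form] using hw
          exact ⟨x, l, rfl, hx, hl, hch, hlk⟩
  · rintro ⟨x, l, rfl, hx, hl, hch, _⟩
    exact ⟨x, l, rfl, hx, hl, hch⟩
  · rintro ⟨x, l, rfl, h⟩
    exact ⟨x, l, rfl, h.head, h.mem, h.chain, by simp⟩

/-- The words of `britton` with a given value form a regular language. By uniqueness of Britton
forms, those with value `k t ^ e g` are the words `x t ^ e y` with `x` of value `k c` and `y` of
value `d⁻¹ g`, where `c` runs over a finite group and `c t ^ e = t ^ e d`. -/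
theorem sub_britton_isRegular [Finite A] [Finite B] (hS : IsStallingsSection π S)
    (l : List (ℤˣ × Word α)) : ∀ x, IsForm A B π S x l →
      (sub (britton A B π S) (piHNN A B φ π)
        {ev (piHNN A B φ π) (form x l)}).IsRegular := by
  induction l with
  | nil =>
    intro x h
    refine isRegular_congr (isRegular_emb (hS.s1 (ev π x))) fun w => ⟨?_, ?_⟩
    · rintro ⟨⟨x', l', rfl, h'⟩, heq⟩
      obtain ⟨rfl, hx'⟩ := h.unique_nil φ h' heq
      exact ⟨x', ⟨h'.head, hx'⟩, by simp⟩
    · rintro ⟨x', ⟨hx', hev⟩, rfl⟩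
      have hev' : ev π x' = ev π x := hev
      refine ⟨⟨x', [], by simp, hx', by simp, List.isChain_nil⟩, ?_⟩
      rw [Set.mem_singleton_iff, form_nil, ev_emb, ev_emb, hev']
  | cons p l ih =>
    obtain ⟨e, y⟩ := p
    intro x h
    have hg := h.good φ
    have htail := h.tail
    dsimp only at hg htail
    have hfin : Finite (toSubgroup A B (-e)) := by
      rcases Int.units_eq_one_or e with rfl | rfl
      · rw [toSubgroup_neg_one]; infer_instance
      · rw [neg_neg, toSubgroup_one]; infer_instance
    have hconj : ∀ c : toSubgroup A B (-e), ∃ d ∈ toSubgroup A B e,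
      (of (c : K) * t ^ (e : ℤ) : HNNExtension K A B φ) = t ^ (e : ℤ) * of d :=
        fun c => exists_conj φ e c.2
    choose d hd hcd using hconj
    refine isRegular_congr (isRegular_iUnion (fun c : toSubgroup A B (-e) =>
      cat (sgn e) (sub (britton A B π S) (piHNN A B φ π)
        {of (d c)⁻¹ * ev (piHNN A B φ π) (form y l)}) (sub S π {ev π x * c})) fun c => ?_)
      fun w => ⟨?_, ?_⟩
    · refine isRegular_cat (hS.s1 _) ?_
      obtain ⟨y2, hy2, hy2'⟩ := hS.exists_rep ((d c)⁻¹ * ev π y)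
      rw [← ev_form_replace φ hy2']
      exact ih y2 (htail.replace_head hy2)
    · rintro ⟨hw, heq⟩
      rw [Set.mem_singleton_iff, ev_form_cons] at heq
      obtain ⟨x', hx', y', hy', rfl, c, hc, hxc, hcw⟩ := britton_split φ hS hw hg heq
      refine ⟨⟨c, hc⟩, x', ⟨hx', hxc⟩, y', ⟨hy', ?_⟩, rfl⟩
      rw [← mul_assoc, hcd ⟨c, hc⟩, mul_assoc, mul_right_inj] at hcw
      rw [Set.mem_singleton_iff, ← hcw]
      simp
    · rintro ⟨c, x', ⟨hx', hxc⟩, y', ⟨hy', hev⟩, rfl⟩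
      rw [Set.mem_singleton_iff] at hxc hev
      refine ⟨cons_mem_britton φ hx' hy' ?_, ?_⟩
      · rw [hev]
        exact hg.of_mul φ hS (inv_mem (hd c))
      · rw [Set.mem_singleton_iff, ev_cat, ev_form_cons, hev, hxc, map_mul, mul_assoc,
          ← mul_assoc (of (c : K)), hcd]
        simp [mul_assoc]

theorem subS_isRegular [Finite A] [Finite B] (hS : IsStallingsSection π S) (e : ℤˣ) :
    (subS A B π S e).IsRegular := by
  have hfin : Finite (toSubgroup A B e) := by
    rcases Int.units_eq_one_or e with rfl | rfl
    · rw [toSubgroup_one]; infer_instance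
    · rw [toSubgroup_neg_one]; infer_instance
  refine isRegular_congr (isRegular_iUnion (fun c : toSubgroup A B e => sub S π {(c : K)})
    fun c => hS.s1 c) fun w => ⟨?_, ?_⟩
  · rintro ⟨hw, he⟩
    exact ⟨⟨_, he⟩, hw, rfl⟩
  · rintro ⟨c, hw, hev⟩
    have hev' : ev π w = c := hev
    refine ⟨hw, ?_⟩
    rw [hev']
    exact c.2

theorem isStallingsSection_britton [Finite A] [Finite B] (hπ : IsMEpi π)
    (hS : IsStallingsSection π S) :
    IsStallingsSection (piHNN A B φ π) (britton A B π S) where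
  regular := britton_isRegular hS.regular (subS_isRegular hS)
  reduced := britton_reduced hS
  inv_mem _ hw := wordInv_mem_britton hπ hS hw
  exists_rep g := by
    obtain ⟨x, l, h, hg⟩ := exists_isForm φ hS g
    exact ⟨_, ⟨x, l, rfl, h⟩, hg⟩
  s1 g := by
    obtain ⟨x, l, h, rfl⟩ := exists_isForm φ hS g
    exact sub_britton_isRegular φ hS l x h
  s2 g g' := by
    rintro w ⟨hw, hev⟩
    obtain ⟨x, l, h, rfl⟩ := exists_isForm φ hS g
    obtain ⟨u, hu, v, hv, h1, h2, h3⟩ := triangle φ hπ hS l x h g' w hw hev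
    refine ⟨u ++ v, ⟨u, ⟨hu, h1⟩, v, ⟨hv, h2⟩, rfl⟩, ?_⟩
    refine redW_eq_of_mk (britton_reduced hS w hw) ?_
    rw [← FreeGroup.mul_mk, h3]

end StallingsHNN

open Stallings in
/-- If `K` has a Stallings section, `H` is a finite subgroup of `K`
and `φ : H → K` is an injective homomorphism, then the HNN extension
`HNN(K, H, φ) = ⟨K, t ∣ t h t⁻¹ = hφ (h ∈ H)⟩` also has a Stallings section. -/
theorem hasStallingsSection_hnn {K : Type} [Group K]
    (hK : HasStallingsSection K) (H : Subgroup K) [Finite H]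
    (φ : ↥H →* K) (hφ : Function.Injective φ) :
    HasStallingsSection (HNNExtension K H φ.range (MonoidHom.ofInjective hφ)) := by
  obtain ⟨α, π, S, hα, hπ, hS⟩ := hK
  have : Finite φ.range := Set.finite_range φ
  exact ⟨Option α, _, _, inferInstance, StallingsHNN.isMEpi_piHNN _ hπ hS,
    StallingsHNN.isStallingsSection_britton _ hπ hS⟩
end
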